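/- arXiv:1310.3658 — 2 statements merged into one kernel-verified Lean document; each statement's English description precedes it below -/
import Mathlib

section
/- Let d, N ≥ 1, λ > 0, and let a^{ij}_{kl} : ℝᵈ → ℝ (1 ≤ i,j ≤ d, 1 ≤ k,l ≤ N) be bounded and uniformly continuous coefficients satisfying the rank-one positivity condition Σ_{i,j,k,l} a^{ij}_{kl}(x) ξᵢ ξⱼ η^k η^l ≥ λ⁻¹ |ξ|² |η|² for all x ∈ ℝᵈ, ξ ∈ ℝᵈ, η ∈ ℝ^N. Then there exists a constant C (depending on d, N, λ, the sup norm of the coefficients, and their modulus of continuity) such that for every φ ∈ C_c^∞(ℝᵈ, ℝ^N): ∫_{ℝᵈ} Σ_{i,j,k,l} a^{ij}_{kl}(x) ∂ᵢφ^k ∂ⱼφ^l dx ≥ (2λ)⁻¹ ‖∇φ‖²_{L²} − C‖φ‖²_{L²}. -/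
open MeasureTheory Set

noncomputable section

/-- Partial derivative of a scalar function on `ℝᵈ` in the `i`-th coordinate
direction. -/
def pd {d : ℕ} (i : Fin d) (g : EuclideanSpace ℝ (Fin d) → ℝ) :
    EuclideanSpace ℝ (Fin d) → ℝ :=
  fun x => fderiv ℝ g x (EuclideanSpace.single i 1)

open scoped FourierTransform LineDeriv

theorem pd_cont {d : ℕ} (i : Fin d) (g : EuclideanSpace ℝ (Fin d) → ℝ)
    (hg : ContDiff ℝ (⊤ : ℕ∞) g) : Continuous (pd i g) :=
  (hg.continuous_fderiv (by simp)).clm_apply continuous_const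

theorem pd_supp {d : ℕ} (i : Fin d) (g : EuclideanSpace ℝ (Fin d) → ℝ)
    (hg : HasCompactSupport g) : HasCompactSupport (pd i g) :=
  hg.fderiv_apply ℝ _

theorem schwartz_integrable {d : ℕ} (f g : SchwartzMap (EuclideanSpace ℝ (Fin d)) ℂ) :
    Integrable (fun x => inner ℂ (f x) (g x)) := by
  have h1 := (f.memLp 2 (volume : Measure (EuclideanSpace ℝ (Fin d)))).star
  have h2 := g.memLp 2 (volume : Measure (EuclideanSpace ℝ (Fin d)))
  have := h2.integrable_mul h1
  refine this.congr (Filter.Eventually.of_forall fun x => ?_)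
  simp [mul_comm]

theorem four_swap {d N : ℕ} {X : Type*} [MeasurableSpace X] {μ : Measure X}
    (F : Fin d → Fin d → Fin N → Fin N → X → ℝ) (hF : ∀ i j k l, Integrable (F i j k l) μ) :
    ∫ x, ∑ i, ∑ j, ∑ k, ∑ l, F i j k l x ∂μ = ∑ i, ∑ j, ∑ k, ∑ l, ∫ x, F i j k l x ∂μ := by
  rw [integral_finsetSum _ (fun i _ => integrable_finsetSum _ fun j _ => integrable_finsetSum _ fun k _ =>
    integrable_finsetSum _ fun l _ => hF i j k l)]
  refine Finset.sum_congr rfl fun i _ => ?_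
  rw [integral_finsetSum _ (fun j _ => integrable_finsetSum _ fun k _ =>
    integrable_finsetSum _ fun l _ => hF i j k l)]
  refine Finset.sum_congr rfl fun j _ => ?_
  rw [integral_finsetSum _ (fun k _ =>
    integrable_finsetSum _ fun l _ => hF i j k l)]
  refine Finset.sum_congr rfl fun k _ => ?_
  rw [integral_finsetSum _ (fun l _ => hF i j k l)]

theorem const_nonneg {d N : ℕ} (c : Fin d → Fin d → Fin N → Fin N → ℝ)
    (hc : ∀ (ξ : EuclideanSpace ℝ (Fin d)) (η : EuclideanSpace ℝ (Fin N)),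
      0 ≤ ∑ i, ∑ j, ∑ k, ∑ l, c i j k l * ξ i * ξ j * η k * η l)
    (u : Fin N → EuclideanSpace ℝ (Fin d) → ℝ) (hu : ∀ k, ContDiff ℝ (⊤ : ℕ∞) (u k))
    (hs : ∀ k, HasCompactSupport (u k)) :
    0 ≤ ∫ x, ∑ i, ∑ j, ∑ k, ∑ l, c i j k l * pd i (u k) x * pd j (u l) x := by
  have hs' : ∀ k, HasCompactSupport (fun x => (u k x : ℂ)) := fun k =>
    (hs k).comp_left (g := Complex.ofReal) Complex.ofReal_zero
  have hu' : ∀ k, ContDiff ℝ (⊤ : ℕ∞) (fun x => (u k x : ℂ)) := fun k =>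
    Complex.ofRealCLM.contDiff.comp (hu k)
  let S : Fin N → SchwartzMap (EuclideanSpace ℝ (Fin d)) ℂ := fun k =>
    (hs' k).toSchwartzMap (hu' k)
  let D : Fin d → Fin N → SchwartzMap (EuclideanSpace ℝ (Fin d)) ℂ := fun i k =>
    ∂_{(EuclideanSpace.single i (1:ℝ) : EuclideanSpace ℝ (Fin d))} (S k)
  have hD : ∀ i k x, D i k x = ((pd i (u k) x : ℝ) : ℂ) := by
    intro i k x
    have h1 : HasFDerivAt (u k) (fderiv ℝ (u k) x) x :=
      ((hu k).differentiable (by simp) x).hasFDerivAt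
    have h2 := Complex.ofRealCLM.hasFDerivAt.comp x h1
    have h3 : (S k : EuclideanSpace ℝ (Fin d) → ℂ) = Complex.ofRealCLM ∘ u k := rfl
    change (∂_{(EuclideanSpace.single i (1:ℝ) : EuclideanSpace ℝ (Fin d))} (S k)) x = _
    rw [SchwartzMap.lineDerivOp_apply_eq_fderiv, h3, h2.fderiv]
    rfl
  have hF : ∀ i k (ξ : EuclideanSpace ℝ (Fin d)),
      𝓕 (D i k) ξ = (2 * Real.pi * Complex.I) * ((ξ i : ℂ) * 𝓕 (S k) ξ) := by
    intro i k ξ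
    have : (fun x : EuclideanSpace ℝ (Fin d) => inner ℝ x
      (EuclideanSpace.single i (1:ℝ) : EuclideanSpace ℝ (Fin d))).HasTemperateGrowth := by fun_prop
    change 𝓕 (∂_{(EuclideanSpace.single i (1:ℝ) : EuclideanSpace ℝ (Fin d))} (S k)) ξ = _
    rw [SchwartzMap.fourier_lineDerivOp_eq]
    rw [smul_apply, SchwartzMap.smulLeftCLM_apply_apply this]
    simp [EuclideanSpace.inner_single_right]
  have hP : ∀ i j k l, ∫ x, c i j k l * pd i (u k) x * pd j (u l) x =
      ∫ ξ, c i j k l * (inner ℂ (𝓕 (D i k) ξ) (𝓕 (D j l) ξ) : ℂ).re := by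
    intro i j k l
    have h1 := SchwartzMap.integral_inner_fourier_fourier (D i k) (D j l)
    rw [integral_const_mul]
    simp_rw [mul_assoc]
    rw [integral_const_mul]
    congr 1
    have h2 := integral_re (schwartz_integrable (𝓕 (D i k)) (𝓕 (D j l)))
    have h3 := integral_re (schwartz_integrable (D i k) (D j l))
    simp only [RCLike.re_eq_complex_re] at h2 h3
    rw [h2, h1, ← h3]
    refine integral_congr_ae (Filter.Eventually.of_forall fun x => ?_)
    simp [hD, mul_comm]
  rw [four_swap]
  · simp_rw [hP]
    rw [← four_swap]
    · refine integral_nonneg fun ξ => ?_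
      have e1 := hc ξ (WithLp.toLp 2 fun k => (𝓕 (S k) ξ).re)
      have e2 := hc ξ (WithLp.toLp 2 fun k => (𝓕 (S k) ξ).im)
      have e3 : ∑ i, ∑ j, ∑ k, ∑ l, c i j k l * (inner ℂ (𝓕 (D i k) ξ) (𝓕 (D j l) ξ) : ℂ).re
        = (2 * Real.pi) ^ 2 * ((∑ i, ∑ j, ∑ k, ∑ l, c i j k l * ξ i * ξ j * (𝓕 (S k) ξ).re * (𝓕 (S l) ξ).re)
          + ∑ i, ∑ j, ∑ k, ∑ l, c i j k l * ξ i * ξ j * (𝓕 (S k) ξ).im * (𝓕 (S l) ξ).im) := by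
        simp only [← Finset.sum_add_distrib, Finset.mul_sum]
        refine Finset.sum_congr rfl fun i _ => Finset.sum_congr rfl fun j _ =>
          Finset.sum_congr rfl fun k _ => Finset.sum_congr rfl fun l _ => ?_
        rw [hF, hF]
        simp
        ring
      simp only [Pi.zero_apply]
      rw [e3]
      exact mul_nonneg (by positivity) (add_nonneg e1 e2)
    · intro i j k l
      exact ((schwartz_integrable (𝓕 (D i k)) (𝓕 (D j l))).re).const_mul _
  · intro i j k l
    refine Continuous.integrable_of_hasCompactSupport ?_ ?_
    · exact (continuous_const.mul (pd_cont i _ (hu k))).mul (pd_cont j _ (hu l))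
    · exact (pd_supp j _ (hs l)).mul_left

theorem exists_bump {d : ℕ} (δ : ℝ) (hδ : 0 < δ) : ∃ ψ : EuclideanSpace ℝ (Fin d) → ℝ,
    ContDiff ℝ (⊤ : ℕ∞) ψ ∧ HasCompactSupport ψ ∧ (∀ x, δ ≤ ‖x‖ → ψ x = 0) ∧
    (∀ i x, δ ≤ ‖x‖ → pd i ψ x = 0) ∧ ∫ x, ψ x * ψ x = 1 := by
  let f : ContDiffBump (0 : EuclideanSpace ℝ (Fin d)) := ⟨δ/4, δ/2, by positivity, by linarith⟩
  have hf : ContDiff ℝ (⊤ : ℕ∞) f := f.contDiff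
  have hI : 0 < ∫ x, f x * f x := by
    refine Continuous.integral_pos_of_hasCompactSupport_nonneg_nonzero
      (f.continuous.mul f.continuous) f.hasCompactSupport.mul_left
      (fun x => mul_self_nonneg _) (x := 0) ?_
    have : f 0 = 1 := f.one_of_mem_closedBall (by simp [f]; positivity)
    simp [this]
  set I := ∫ x, f x * f x with hIdef
  have hts : ∀ x : EuclideanSpace ℝ (Fin d), δ ≤ ‖x‖ → 
      x ∉ tsupport (fun x => (Real.sqrt I)⁻¹ * f x) := by
    intro x hx h
    have h1 : x ∈ tsupport f := tsupport_mul_subset_right h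
    rw [f.tsupport_eq] at h1
    simp [f] at h1
    linarith
  refine ⟨fun x => (Real.sqrt I)⁻¹ * f x, contDiff_const.mul hf, f.hasCompactSupport.mul_left,
    fun x hx => image_eq_zero_of_notMem_tsupport (f := fun x => (Real.sqrt I)⁻¹ * f x) (hts x hx), ?_, ?_⟩
  · intro i x hx
    have : fderiv ℝ (fun x => (Real.sqrt I)⁻¹ * f x) x = 0 := by
      by_contra hne
      exact hts x hx (support_fderiv_subset ℝ hne)
    simp [pd, this]
  · have : ∀ x, (Real.sqrt I)⁻¹ * f x * ((Real.sqrt I)⁻¹ * f x) = I⁻¹ * (f x * f x) := by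
      intro x
      have : (Real.sqrt I)⁻¹ * (Real.sqrt I)⁻¹ = I⁻¹ := by
        rw [← mul_inv, Real.mul_self_sqrt hI.le]
      rw [← this]; ring
    simp_rw [this]
    rw [integral_const_mul]
    exact inv_mul_cancel₀ hI.ne'

theorem cross_zero {d : ℕ} (i : Fin d) (ψ : EuclideanSpace ℝ (Fin d) → ℝ)
    (h1 : ContDiff ℝ (⊤ : ℕ∞) ψ) (h2 : HasCompactSupport ψ) : ∫ x, ψ x * pd i ψ x = 0 := by
  have hint : Integrable (fun x => ψ x * pd i ψ x) :=
    (h1.continuous.mul (pd_cont i ψ h1)).integrable_of_hasCompactSupport h2.mul_right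
  have hint' : Integrable (fun x => pd i ψ x * ψ x) := by simpa only [mul_comm] using hint
  have := integral_mul_fderiv_eq_neg_fderiv_mul_of_integrable (μ := volume) (f := ψ) (g := ψ)
    (v := EuclideanSpace.single i 1) hint' hint
    ((h1.continuous.mul h1.continuous).integrable_of_hasCompactSupport h2.mul_right)
    (fun x _ => h1.differentiable (by simp) x) (fun x _ => h1.differentiable (by simp) x)
  have h4 : ∫ x, pd i ψ x * ψ x = ∫ x, ψ x * pd i ψ x := by simp only [mul_comm]
  change ∫ x, ψ x * pd i ψ x = - ∫ x, pd i ψ x * ψ x at this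
  linarith

theorem delta_sum {d N : ℕ} (v w : Fin d → Fin N → ℝ) (s : ℝ) :
    ∑ i, ∑ j, ∑ k, ∑ l, (s * ((if i = j then 1 else 0) * (if k = l then 1 else 0))) * v i k * w j l
      = s * ∑ i, ∑ k, v i k * w i k := by
  have : ∀ i j : Fin d, ∀ k l : Fin N,
    (s * ((if i = j then 1 else 0) * (if k = l then 1 else 0))) * v i k * w j l =
     if i = j then (if k = l then s * (v i k * w j l) else 0) else 0 := by
    intro i j k l
    split_ifs <;> simp [mul_assoc]
  simp only [this, Finset.sum_ite_irrel, Finset.sum_const_zero, Finset.sum_ite_eq, Finset.mem_univ,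
    if_true, Finset.mul_sum]

theorem eps_bound {d N : ℕ} (b : Fin d → Fin d → Fin N → Fin N → ℝ) (ε : ℝ) (hε : 0 ≤ ε)
    (hb : ∀ i j k l, |b i j k l| ≤ ε) (v : Fin d → Fin N → ℝ) :
    |∑ i, ∑ j, ∑ k, ∑ l, b i j k l * v i k * v j l| ≤ ε * (d * N) * ∑ i, ∑ k, v i k ^ 2 := by
  have h1 : |∑ i, ∑ j, ∑ k, ∑ l, b i j k l * v i k * v j l| ≤
      ∑ i, ∑ j, ∑ k, ∑ l, ε * (|v i k| * |v j l|) := by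
    refine (Finset.abs_sum_le_sum_abs _ _).trans (Finset.sum_le_sum fun i _ => ?_)
    refine (Finset.abs_sum_le_sum_abs _ _).trans (Finset.sum_le_sum fun j _ => ?_)
    refine (Finset.abs_sum_le_sum_abs _ _).trans (Finset.sum_le_sum fun k _ => ?_)
    refine (Finset.abs_sum_le_sum_abs _ _).trans (Finset.sum_le_sum fun l _ => ?_)
    rw [mul_assoc, abs_mul, abs_mul]
    exact mul_le_mul_of_nonneg_right (hb i j k l) (by positivity)
  have h2 : ∑ i, ∑ j, ∑ k, ∑ l, ε * (|v i k| * |v j l|) =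
      ε * (∑ p : Fin d × Fin N, |v p.1 p.2|) ^ 2 := by
    rw [Fintype.sum_prod_type, sq, Finset.sum_mul_sum, Finset.mul_sum]
    refine Finset.sum_congr rfl fun i _ => ?_
    rw [Finset.mul_sum]
    refine Finset.sum_congr rfl fun j _ => ?_
    rw [Finset.sum_mul_sum]
    simp only [Finset.mul_sum]
  have h3 := sq_sum_le_card_mul_sum_sq (s := Finset.univ) (f := fun p : Fin d × Fin N => |v p.1 p.2|)
  simp only [sq_abs, Finset.card_univ, Fintype.card_prod, Fintype.card_fin] at h3
  rw [Fintype.sum_prod_type (fun p : Fin d × Fin N => v p.1 p.2 ^ 2)] at h3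
  push_cast at h3
  calc _ ≤ _ := h1
    _ = _ := h2
    _ ≤ _ := by rw [mul_assoc]; exact mul_le_mul_of_nonneg_left h3 hε

theorem pd_prod {d : ℕ} (i : Fin d) (ψ g : EuclideanSpace ℝ (Fin d) → ℝ)
    (h1 : ContDiff ℝ (⊤ : ℕ∞) ψ) (hg : ContDiff ℝ (⊤ : ℕ∞) g) (y x : EuclideanSpace ℝ (Fin d)) :
    pd i (fun x => ψ (x - y) * g x) x = ψ (x - y) * pd i g x + g x * pd i ψ (x - y) := by
  have e1 : HasFDerivAt g (fderiv ℝ g x) x := (hg.differentiable (by simp) x).hasFDerivAt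
  have e2 : HasFDerivAt ψ (fderiv ℝ ψ (x - y)) (x - y) :=
    (h1.differentiable (by simp) (x - y)).hasFDerivAt
  have e3 : HasFDerivAt (fun x => ψ (x - y)) (fderiv ℝ ψ (x - y)) x := by
    exact (hasFDerivAt_comp_sub y).2 e2
  have e4 := e3.mul e1
  unfold pd
  have e5 : fderiv ℝ (fun x => ψ (x - y) * g x) x = _ := e4.fderiv
  rw [e5]
  simp

theorem inner_int {d N : ℕ} (ψ : EuclideanSpace ℝ (Fin d) → ℝ)
    (h1 : ContDiff ℝ (⊤ : ℕ∞) ψ) (h2 : HasCompactSupport ψ) (h3 : ∫ x, ψ x * ψ x = 1)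
    (c : Fin d → Fin d → Fin N → Fin N → ℝ) (v : Fin d → Fin N → ℝ) (w : Fin N → ℝ)
    (x : EuclideanSpace ℝ (Fin d)) :
    ∫ y, ∑ i, ∑ j, ∑ k, ∑ l, c i j k l * (ψ (x - y) * v i k + w k * pd i ψ (x - y)) *
        (ψ (x - y) * v j l + w l * pd j ψ (x - y)) =
      ∑ i, ∑ j, ∑ k, ∑ l, c i j k l * (v i k * v j l + w k * w l * ∫ z, pd i ψ z * pd j ψ z) := by
  rw [integral_sub_left_eq_self (fun z => ∑ i, ∑ j, ∑ k, ∑ l, c i j k l *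
    (ψ z * v i k + w k * pd i ψ z) * (ψ z * v j l + w l * pd j ψ z)) volume x]
  have c1 : Integrable (fun z => ψ z * ψ z) :=
    (h1.continuous.mul h1.continuous).integrable_of_hasCompactSupport h2.mul_right
  have c2 : ∀ i, Integrable (fun z => ψ z * pd i ψ z) := fun i =>
    (h1.continuous.mul (pd_cont i ψ h1)).integrable_of_hasCompactSupport h2.mul_right
  have c3 : ∀ i j, Integrable (fun z => pd i ψ z * pd j ψ z) := fun i j =>
    ((pd_cont i ψ h1).mul (pd_cont j ψ h1)).integrable_of_hasCompactSupport (pd_supp i ψ h2).mul_right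
  have e : ∀ i j k l, (fun z => c i j k l *
    (ψ z * v i k + w k * pd i ψ z) * (ψ z * v j l + w l * pd j ψ z)) = fun z =>
     (c i j k l * v i k * v j l) * (ψ z * ψ z) + (c i j k l * v i k * w l) * (ψ z * pd j ψ z)
     + (c i j k l * v j l * w k) * (ψ z * pd i ψ z)
     + (c i j k l * w k * w l) * (pd i ψ z * pd j ψ z) := by
    intro i j k l; ext z; ring
  rw [four_swap]
  · refine Finset.sum_congr rfl fun i _ => Finset.sum_congr rfl fun j _ =>
          Finset.sum_congr rfl fun k _ => Finset.sum_congr rfl fun l _ => ?_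
    rw [e, integral_add, integral_add, integral_add, integral_const_mul, integral_const_mul,
      integral_const_mul, integral_const_mul, h3, cross_zero i ψ h1 h2, cross_zero j ψ h1 h2]
    · ring
    · exact c1.const_mul _
    · exact (c2 j).const_mul _
    · exact (c1.const_mul _).add ((c2 j).const_mul _)
    · exact (c2 i).const_mul _
    · exact ((c1.const_mul _).add ((c2 j).const_mul _)).add ((c2 i).const_mul _)
    · exact (c3 i j).const_mul _
  · intro i j k l
    rw [e]
    exact (((c1.const_mul _).add ((c2 j).const_mul _)).add ((c2 i).const_mul _)).add
      ((c3 i j).const_mul _)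

theorem avg_nonneg {d N : ℕ} (ψ : EuclideanSpace ℝ (Fin d) → ℝ)
    (h1 : ContDiff ℝ (⊤ : ℕ∞) ψ) (h2 : HasCompactSupport ψ) (h3 : ∫ x, ψ x * ψ x = 1)
    (c : Fin d → Fin d → Fin N → Fin N → EuclideanSpace ℝ (Fin d) → ℝ)
    (hc : ∀ i j k l, Continuous (c i j k l))
    (u : Fin N → EuclideanSpace ℝ (Fin d) → ℝ) (hu : ∀ k, ContDiff ℝ (⊤ : ℕ∞) (u k))
    (hs : ∀ k, HasCompactSupport (u k))
    (hpos : ∀ y, 0 ≤ ∫ x, ∑ i, ∑ j, ∑ k, ∑ l, c i j k l x *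
      (ψ (x - y) * pd i (u k) x + u k x * pd i ψ (x - y)) *
      (ψ (x - y) * pd j (u l) x + u l x * pd j ψ (x - y))) :
    0 ≤ ∫ x, ∑ i, ∑ j, ∑ k, ∑ l, c i j k l x * (pd i (u k) x * pd j (u l) x
      + u k x * u l x * ∫ z, pd i ψ z * pd j ψ z) := by
  have key := integral_nonneg (μ := volume) (f := fun y => ∫ x, ∑ i, ∑ j, ∑ k, ∑ l, c i j k l x *
      (ψ (x - y) * pd i (u k) x + u k x * pd i ψ (x - y)) *
      (ψ (x - y) * pd j (u l) x + u l x * pd j ψ (x - y))) hpos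
  let F : EuclideanSpace ℝ (Fin d) → EuclideanSpace ℝ (Fin d) → ℝ := fun y x =>
    ∑ i, ∑ j, ∑ k, ∑ l, c i j k l x *
      (ψ (x - y) * pd i (u k) x + u k x * pd i ψ (x - y)) *
      (ψ (x - y) * pd j (u l) x + u l x * pd j ψ (x - y))
  have hFc : Continuous F.uncurry := by
    have q1 := h1.continuous
    have q2 := fun i => pd_cont i ψ h1
    have q3 := fun k => (hu k).continuous
    have q4 := fun i k => pd_cont i (u k) (hu k)
    change Continuous (fun p : EuclideanSpace ℝ (Fin d) × EuclideanSpace ℝ (Fin d) => F p.1 p.2)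
    simp only [F]
    refine continuous_finsetSum _ fun i _ => continuous_finsetSum _ fun j _ =>
      continuous_finsetSum _ fun k _ => continuous_finsetSum _ fun l _ => ?_
    have r1 := hc i j k l
    have r2 := q2 i
    have r3 := q2 j
    have r4 := q3 k
    have r5 := q3 l
    have r6 := q4 i k
    have r7 := q4 j l
    fun_prop
  have hK : IsCompact (⋃ k, tsupport (u k)) := isCompact_iUnion fun k => hs k
  have hFs : HasCompactSupport F.uncurry := by
    refine HasCompactSupport.intro (K := (fun p : EuclideanSpace ℝ (Fin d) × EuclideanSpace ℝ (Fin d) =>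
      (p.1 - p.2, p.1)) '' ((⋃ k, tsupport (u k)) ×ˢ tsupport ψ)) ?_ ?_
    · exact (hK.prod h2).image (by fun_prop)
    · rintro ⟨y, x⟩ hyx
      change F y x = 0
      have hz : ∀ i k, ψ (x - y) * pd i (u k) x + u k x * pd i ψ (x - y) = 0 := by
        intro i k
        by_cases hx : x ∈ tsupport (u k)
        · have hxy : x - y ∉ tsupport ψ := by
            intro h
            exact hyx ⟨(x, x - y), ⟨mem_iUnion.2 ⟨k, hx⟩, h⟩, by simp⟩
          have z1 : ψ (x - y) = 0 := image_eq_zero_of_notMem_tsupport hxy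
          have z2 : fderiv ℝ ψ (x - y) = 0 := by
            by_contra hne
            exact hxy (support_fderiv_subset ℝ hne)
          simp [z1, pd, z2]
        · have z1 : u k x = 0 := image_eq_zero_of_notMem_tsupport hx
          have z2 : fderiv ℝ (u k) x = 0 := by
            by_contra hne
            exact hx (support_fderiv_subset ℝ hne)
          simp [z1, pd, z2]
      simp only [F, hz, mul_zero, Finset.sum_const_zero]
  have sw := integral_integral_swap_of_hasCompactSupport hFc hFs (μ := volume) (ν := volume)
  change 0 ≤ ∫ y, ∫ x, F y x at key
  rw [sw] at key
  simp only [F] at key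
  have hin := fun x => inner_int ψ h1 h2 h3 (fun i j k l => c i j k l x) (fun i k => pd i (u k) x)
    (fun k => u k x) x
  simp_rw [hin] at key
  exact key

theorem sq_norm_int {d N : ℕ} (φ : EuclideanSpace ℝ (Fin d) → EuclideanSpace ℝ (Fin N))
    (hφ : Continuous φ) (hφs : HasCompactSupport φ) : Integrable (fun x => ‖φ x‖ ^ 2) := by
  simp only [sq]
  exact (hφ.norm.mul hφ.norm).integrable_of_hasCompactSupport hφs.norm.mul_left

theorem sq_int {d : ℕ} (g : EuclideanSpace ℝ (Fin d) → ℝ)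
    (hg : Continuous g) (hs : HasCompactSupport g) : Integrable (fun x => g x ^ 2) := by
  simp only [sq]
  exact (hg.mul hg).integrable_of_hasCompactSupport hs.mul_left

set_option maxHeartbeats 1000000 in
/-- Gårding's inequality for second order systems in divergence
form: bounded, uniformly continuous coefficients satisfying the pointwise
rank-one (Legendre–Hadamard) positivity condition give coercivity of the
Dirichlet form up to a lower order `L²` term. -/
theorem statement_10
    (d N : ℕ) (hd : 1 ≤ d) (hN : 1 ≤ N) (lam : ℝ) (hlam : 0 < lam)
    (a : Fin d → Fin d → Fin N → Fin N → EuclideanSpace ℝ (Fin d) → ℝ)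
    (hbdd : ∃ A : ℝ, ∀ i j k l x, |a i j k l x| ≤ A)
    (hucont : ∀ i j k l, UniformContinuous (a i j k l))
    (hLH : ∀ (x : EuclideanSpace ℝ (Fin d)) (ξ : EuclideanSpace ℝ (Fin d))
      (η : EuclideanSpace ℝ (Fin N)),
      lam⁻¹ * (‖ξ‖ ^ 2 * ‖η‖ ^ 2) ≤
        ∑ i, ∑ j, ∑ k, ∑ l, a i j k l x * ξ i * ξ j * η k * η l) :
    ∃ C : ℝ, ∀ φ : EuclideanSpace ℝ (Fin d) → EuclideanSpace ℝ (Fin N),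
      ContDiff ℝ (⊤ : ℕ∞) φ → HasCompactSupport φ →
      ((2 * lam)⁻¹ * (∫ x, ∑ i, ∑ k, (pd i (fun y => φ y k) x) ^ 2)
          - C * (∫ x, ‖φ x‖ ^ 2)) ≤
        ∫ x, ∑ i, ∑ j, ∑ k, ∑ l,
          a i j k l x * pd i (fun y => φ y k) x * pd j (fun y => φ y l) x := by
  obtain ⟨A, hA⟩ := hbdd
  have hd' : (0:ℝ) < d := by exact_mod_cast hd
  have hN' : (0:ℝ) < N := by exact_mod_cast hN
  set ε : ℝ := (2 * lam)⁻¹ / (d * N) with hεdef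
  have hε : 0 < ε := by positivity
  -- uniform modulus of continuity
  have hδ : ∃ δ > 0, ∀ i j k l x y, ‖x - y‖ < δ → |a i j k l x - a i j k l y| ≤ ε := by
    have h0 : ∀ i j k l, ∃ δ > 0, ∀ x y, dist x y < δ → dist (a i j k l x) (a i j k l y) < ε := by
      intro i j k l
      obtain ⟨δ, hδ, h⟩ := Metric.uniformContinuous_iff.1 (hucont i j k l) ε hε
      exact ⟨δ, hδ, fun x y hxy => h hxy⟩
    choose D hD0 hD using h0
    have : Nonempty (Fin d × Fin d × Fin N × Fin N) := ⟨⟨0, hd⟩, ⟨0, hd⟩, ⟨0, hN⟩, ⟨0, hN⟩⟩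
    obtain ⟨p, hp⟩ := Finite.exists_min
      (fun p : Fin d × Fin d × Fin N × Fin N => D p.1 p.2.1 p.2.2.1 p.2.2.2)
    refine ⟨D p.1 p.2.1 p.2.2.1 p.2.2.2, hD0 _ _ _ _, fun i j k l x y hxy => ?_⟩
    have := hD i j k l x y (by rw [dist_eq_norm]; exact hxy.trans_le (hp (i, j, k, l)))
    rw [Real.dist_eq] at this
    exact this.le
  obtain ⟨δ, hδ0, hδ⟩ := hδ
  obtain ⟨ψ, h1, h2, hψ0, hψ1, h3⟩ := exists_bump (d := d) δ hδ0
  let K : ℝ := |A| + (2 * lam)⁻¹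
  let M : Fin d → Fin d → ℝ := fun i j => ∫ z, pd i ψ z * pd j ψ z
  let c : Fin d → Fin d → Fin N → Fin N → EuclideanSpace ℝ (Fin d) → ℝ := fun i j k l x =>
    a i j k l x - (2 * lam)⁻¹ * ((if i = j then 1 else 0) * (if k = l then 1 else 0))
  have hcc : ∀ i j k l, Continuous (c i j k l) := fun i j k l =>
    (hucont i j k l).continuous.sub continuous_const
  have hcK : ∀ i j k l x, |c i j k l x| ≤ K := by
    intro i j k l x
    have t1 := (hA i j k l x).trans (le_abs_self A)
    have t2 : |(2 * lam)⁻¹ * ((if i = j then (1:ℝ) else 0) * (if k = l then (1:ℝ) else 0))|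
        ≤ (2 * lam)⁻¹ := by
      have : (0:ℝ) < (2 * lam)⁻¹ := by positivity
      split_ifs <;> simp [abs_of_pos hlam] <;> positivity
    exact (abs_sub _ _).trans (add_le_add t1 t2)
  have hcsum : ∀ x (v : Fin d → Fin N → ℝ), ∑ i, ∑ j, ∑ k, ∑ l, c i j k l x * v i k * v j l =
      (∑ i, ∑ j, ∑ k, ∑ l, a i j k l x * v i k * v j l) - (2 * lam)⁻¹ * ∑ i, ∑ k, v i k ^ 2 := by
    intro x v
    have := delta_sum v v (2 * lam)⁻¹
    simp only [← sq] at this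
    rw [← this]
    simp only [c, sub_mul, Finset.sum_sub_distrib]
  refine ⟨∑ i : Fin d, ∑ j : Fin d, ∑ k : Fin N, ∑ l : Fin N, K * |M i j|, fun φ hφ hφs => ?_⟩
  let u : Fin N → EuclideanSpace ℝ (Fin d) → ℝ := fun k y => φ y k
  have hu : ∀ k, ContDiff ℝ (⊤ : ℕ∞) (u k) := fun k =>
    contDiff_euclidean.1 hφ k
  have hs : ∀ k, HasCompactSupport (u k) := fun k =>
    hφs.comp_left (g := fun w : EuclideanSpace ℝ (Fin N) => w k) rfl
  have hpos : ∀ y, 0 ≤ ∫ x, ∑ i, ∑ j, ∑ k, ∑ l, c i j k l x *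
      (ψ (x - y) * pd i (u k) x + u k x * pd i ψ (x - y)) *
      (ψ (x - y) * pd j (u l) x + u l x * pd j ψ (x - y)) := by
    intro y
    let b : Fin d → Fin d → Fin N → Fin N → ℝ := fun i j k l =>
      a i j k l y - lam⁻¹ * ((if i = j then 1 else 0) * (if k = l then 1 else 0))
    have hbsum : ∀ (v : Fin d → Fin N → ℝ), ∑ i, ∑ j, ∑ k, ∑ l, b i j k l * v i k * v j l =
      (∑ i, ∑ j, ∑ k, ∑ l, a i j k l y * v i k * v j l) - lam⁻¹ * ∑ i, ∑ k, v i k ^ 2 := by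
      intro v
      have := delta_sum v v lam⁻¹
      simp only [← sq] at this
      rw [← this]
      simp only [b, sub_mul, Finset.sum_sub_distrib]
    let W : Fin N → EuclideanSpace ℝ (Fin d) → ℝ := fun k x => ψ (x - y) * u k x
    have hW : ∀ k, ContDiff ℝ (⊤ : ℕ∞) (W k) := fun k =>
      (h1.comp (contDiff_id.sub contDiff_const)).mul (hu k)
    have hWs : ∀ k, HasCompactSupport (W k) := fun k => (hs k).mul_left
    have hWpd : ∀ i k x, ψ (x - y) * pd i (u k) x + u k x * pd i ψ (x - y) = pd i (W k) x :=
      fun i k x => (pd_prod i ψ (u k) h1 (hu k) y x).symm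
    have hconst := const_nonneg b (by
      intro ξ η
      have e1 := hbsum (fun i k => ξ i * η k)
      have e2 : ∑ i, ∑ j, ∑ k, ∑ l, b i j k l * ξ i * ξ j * η k * η l =
          ∑ i, ∑ j, ∑ k, ∑ l, b i j k l * (ξ i * η k) * (ξ j * η l) := by
        refine Finset.sum_congr rfl fun i _ => Finset.sum_congr rfl fun j _ =>
          Finset.sum_congr rfl fun k _ => Finset.sum_congr rfl fun l _ => by ring
      have e3 : ∑ i, ∑ j, ∑ k, ∑ l, a i j k l y * ξ i * ξ j * η k * η l =
          ∑ i, ∑ j, ∑ k, ∑ l, a i j k l y * (ξ i * η k) * (ξ j * η l) := by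
        refine Finset.sum_congr rfl fun i _ => Finset.sum_congr rfl fun j _ =>
          Finset.sum_congr rfl fun k _ => Finset.sum_congr rfl fun l _ => by ring
      have e4 : ∑ i, ∑ k, (ξ i * η k) ^ 2 = ‖ξ‖ ^ 2 * ‖η‖ ^ 2 := by
        rw [EuclideanSpace.real_norm_sq_eq, EuclideanSpace.real_norm_sq_eq, Finset.sum_mul_sum]
        simp only [mul_pow]
      have e5 := hLH y ξ η
      rw [e2, e1, e4, ← e3]
      linarith) W hW hWs
    simp only [hWpd]
    have hint : ∀ g : Fin d → Fin d → Fin N → Fin N → EuclideanSpace ℝ (Fin d) → ℝ,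
        (∀ i j k l, Continuous (g i j k l)) → Integrable (fun x => ∑ i, ∑ j, ∑ k, ∑ l,
          g i j k l x * pd i (W k) x * pd j (W l) x) := by
      intro g hg
      refine integrable_finsetSum _ fun i _ => integrable_finsetSum _ fun j _ =>
        integrable_finsetSum _ fun k _ => integrable_finsetSum _ fun l _ => ?_
      exact (((hg i j k l).mul (pd_cont i _ (hW k))).mul
        (pd_cont j _ (hW l))).integrable_of_hasCompactSupport (pd_supp j _ (hWs l)).mul_left
    refine hconst.trans (integral_mono (hint (fun i j k l _ => b i j k l)
      (fun _ _ _ _ => continuous_const)) (hint c hcc) fun x => ?_)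
    simp only
    rw [hbsum (fun i k => pd i (W k) x), hcsum x (fun i k => pd i (W k) x)]
    by_cases hxy : ‖x - y‖ < δ
    · have e1 := eps_bound (fun i j k l => a i j k l x - a i j k l y) ε hε.le
        (fun i j k l => hδ i j k l x y hxy) (fun i k => pd i (W k) x)
      have e2 : ε * (d * N) = (2 * lam)⁻¹ := by
        rw [hεdef]; field_simp
      rw [e2] at e1
      simp only [sub_mul, Finset.sum_sub_distrib] at e1
      have e3 := (abs_le.1 e1).1
      have e4 : lam⁻¹ = (2 * lam)⁻¹ + (2 * lam)⁻¹ := by field_simp; norm_num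
      rw [e4, add_mul]
      linarith
    · have hz : ∀ i k, pd i (W k) x = 0 := by
        intro i k
        rw [← hWpd, hψ0 _ (not_lt.1 hxy), hψ1 _ _ (not_lt.1 hxy)]
        simp
      simp [hz]
  have hav := avg_nonneg ψ h1 h2 h3 c hcc u hu hs hpos
  have hint : ∀ g : Fin d → Fin d → Fin N → Fin N → EuclideanSpace ℝ (Fin d) → ℝ,
      (∀ i j k l, Continuous (g i j k l)) → Integrable (fun x => ∑ i, ∑ j, ∑ k, ∑ l,
        g i j k l x * pd i (u k) x * pd j (u l) x) := by
    intro g hg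
    refine integrable_finsetSum _ fun i _ => integrable_finsetSum _ fun j _ =>
      integrable_finsetSum _ fun k _ => integrable_finsetSum _ fun l _ => ?_
    exact (((hg i j k l).mul (pd_cont i _ (hu k))).mul
      (pd_cont j _ (hu l))).integrable_of_hasCompactSupport (pd_supp j _ (hs l)).mul_left
  have hintφ : Integrable (fun x => ‖φ x‖ ^ 2) := sq_norm_int φ hφ.continuous hφs
  have hintsq : Integrable (fun x => ∑ i, ∑ k, pd i (u k) x ^ 2) := by
    refine integrable_finsetSum _ fun i _ => integrable_finsetSum _ fun k _ => ?_
    exact sq_int _ (pd_cont i _ (hu k)) (pd_supp i _ (hs k))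
  have hinta := hint a (fun i j k l => (hucont i j k l).continuous)
  set C : ℝ := ∑ i : Fin d, ∑ j : Fin d, ∑ k : Fin N, ∑ l : Fin N, K * |M i j| with hC
  have hfin : ∫ x, ∑ i, ∑ j, ∑ k, ∑ l, c i j k l x * (pd i (u k) x * pd j (u l) x
      + u k x * u l x * ∫ z, pd i ψ z * pd j ψ z) ≤
      ∫ x, ((∑ i, ∑ j, ∑ k, ∑ l, a i j k l x * pd i (u k) x * pd j (u l) x)
        - (2 * lam)⁻¹ * (∑ i, ∑ k, pd i (u k) x ^ 2) + C * ‖φ x‖ ^ 2) := by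
    refine integral_mono ?_ ((hinta.sub (hintsq.const_mul _)).add (hintφ.const_mul _)) fun x => ?_
    · refine integrable_finsetSum _ fun i _ => integrable_finsetSum _ fun j _ =>
        integrable_finsetSum _ fun k _ => integrable_finsetSum _ fun l _ => ?_
      refine Continuous.integrable_of_hasCompactSupport ?_ ?_
      · exact (hcc i j k l).mul (((pd_cont i _ (hu k)).mul (pd_cont j _ (hu l))).add
          (((hu k).continuous.mul (hu l).continuous).mul continuous_const))
      · exact HasCompactSupport.mul_left (HasCompactSupport.add (pd_supp j _ (hs l)).mul_left
          ((hs l).mul_left.mul_right))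
    · simp only
      rw [← hcsum x (fun i k => pd i (u k) x), hC]
      simp only [Finset.sum_mul, ← Finset.sum_add_distrib]
      refine Finset.sum_le_sum fun i _ => Finset.sum_le_sum fun j _ =>
        Finset.sum_le_sum fun k _ => Finset.sum_le_sum fun l _ => ?_
      have b1 : ∀ k, |u k x| ≤ ‖φ x‖ := fun k => by
        simpa using PiLp.norm_apply_le (φ x) k
      have b2 : |c i j k l x * (u k x * u l x * M i j)| ≤ K * |M i j| * ‖φ x‖ ^ 2 := by
        rw [abs_mul, abs_mul, abs_mul]
        calc _ ≤ K * (‖φ x‖ * ‖φ x‖ * |M i j|) := by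
              have := hcK i j k l x
              have := b1 k
              have := b1 l
              gcongr
          _ = _ := by ring
      have b3 := le_of_abs_le b2
      change c i j k l x * (pd i (u k) x * pd j (u l) x + u k x * u l x * M i j) ≤ _
      linarith
  rw [integral_add (by exact hinta.sub (hintsq.const_mul _)) (hintφ.const_mul _),
    integral_sub hinta (hintsq.const_mul _), integral_const_mul, integral_const_mul] at hfin
  have := hav.trans hfin
  change (2 * lam)⁻¹ * (∫ x, ∑ i, ∑ k, (pd i (u k) x) ^ 2)
          - C * (∫ x, ‖φ x‖ ^ 2) ≤
        ∫ x, ∑ i, ∑ j, ∑ k, ∑ l,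
          a i j k l x * pd i (u k) x * pd j (u l) x
  linarith
end
end

section
/- Let d ≥ 1 and let v : ℝᵈ → ℝ be locally integrable with ∫_{ℝᵈ} (1+|y|)^{−d−1} |v(y)| dy < ∞ and finite BMO seminorm ‖v‖_{BMO} := sup_B (1/|B|) ∫_B |v − v_B| dy, where the supremum is over all balls B and v_B is the mean of v over B. Let u(t,x) be the heat extension of v. Then there is a constant C depending only on d such that sup_{x₀∈ℝᵈ, R>0} ( R^{−d} ∫₀^{R²} ∫_{B_R(x₀)} |∇ₓu(t,y)|² dy dt )^{1/2} ≤ C ‖v‖_{BMO}. -/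
open MeasureTheory Set Metric

noncomputable section

/-- The heat extension `u(t,x) = (4πt)^{-d/2} ∫ exp(−|x−y|²/(4t)) v(y) dy`. -/
def heatExt {d : ℕ} (v : EuclideanSpace ℝ (Fin d) → ℝ) (t : ℝ)
    (x : EuclideanSpace ℝ (Fin d)) : ℝ :=
  (4 * Real.pi * t) ^ (-(d : ℝ) / 2) *
    ∫ y : EuclideanSpace ℝ (Fin d), Real.exp (-‖x - y‖ ^ 2 / (4 * t)) * v y

/-- Gaussian heat kernel. -/
def Gk {d : ℕ} (s : ℝ) (z : EuclideanSpace ℝ (Fin d)) : ℝ :=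
  (4 * Real.pi * s) ^ (-(d : ℝ) / 2) * Real.exp (-‖z‖ ^ 2 / (4 * s))

lemma heatExt_eq {d : ℕ} (v : EuclideanSpace ℝ (Fin d) → ℝ) (t : ℝ)
    (x : EuclideanSpace ℝ (Fin d)) : heatExt v t x = ∫ y, Gk t (x - y) * v y := by
  simp only [heatExt, Gk, mul_assoc]
  rw [integral_const_mul]

lemma Gk_pos {d : ℕ} {s : ℝ} (hs : 0 < s) (z : EuclideanSpace ℝ (Fin d)) : 0 < Gk s z := by
  unfold Gk; positivity

lemma Gk_cont {d : ℕ} (s : ℝ) : Continuous (Gk (d := d) s) := by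
  unfold Gk
  fun_prop

lemma Gk_exp {d : ℕ} {s : ℝ} (z : EuclideanSpace ℝ (Fin d)) :
    Gk s z = (4 * Real.pi * s) ^ (-(d : ℝ) / 2) * Real.exp (-(1/(4*s)) * ‖z‖^2) := by
  unfold Gk
  congr 2
  ring

lemma integral_Gk0 {d : ℕ} {s : ℝ} (hs : 0 < s) :
    ∫ z : EuclideanSpace ℝ (Fin d), Gk s z = 1 := by
  simp only [Gk_exp]
  rw [integral_const_mul, GaussianFourier.integral_rexp_neg_mul_sq_norm (by positivity)]
  have h1 : Real.pi / (1/(4*s)) = 4 * Real.pi * s := by field_simp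
  rw [h1, ← Real.rpow_add (by positivity)]
  simp
  ring_nf
  simp

lemma integrable_Gk0 {d : ℕ} {s : ℝ} (hs : 0 < s) :
    Integrable (Gk (d := d) s) := by
  by_contra h
  have := integral_Gk0 (d := d) hs
  rw [integral_undef h] at this
  norm_num at this

lemma integral_Gk {d : ℕ} {s : ℝ} (hs : 0 < s) (x : EuclideanSpace ℝ (Fin d)) :
    ∫ y, Gk s (x - y) = 1 := by
  rw [integral_sub_left_eq_self (fun z => Gk s z) volume x, integral_Gk0 hs]

lemma integrable_Gk {d : ℕ} {s : ℝ} (hs : 0 < s) (x : EuclideanSpace ℝ (Fin d)) :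
    Integrable (fun y => Gk s (x - y)) :=
  (integrable_Gk0 hs).comp_sub_left x

lemma Gk_mul {d : ℕ} {s t : ℝ} (hs : 0 < s) (ht : 0 < t) (x y a : EuclideanSpace ℝ (Fin d)) :
    Gk t (x - a) * Gk s (a - y) =
      Gk (t + s) (x - y) * Gk (t * s / (t + s)) (a - (t+s)⁻¹ • (s • x + t • y)) := by
  have key : ∀ p q : EuclideanSpace ℝ (Fin d),
      ‖p‖^2/(4*t) + ‖q‖^2/(4*s) = ‖p+q‖^2/(4*(t+s)) +
        ‖(t+s)⁻¹ • (t • q - s • p)‖^2/(4*(t*s/(t+s))) := by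
    intro p q
    rw [norm_smul, mul_pow, norm_sub_sq_real, norm_add_sq_real, norm_smul, norm_smul,
      inner_smul_left, inner_smul_right, real_inner_comm p q]
    simp only [Real.norm_eq_abs, mul_pow, sq_abs, RCLike.conj_to_real]
    field_simp
    ring
  have hk := key (x - a) (a - y)
  have e1 : x - a + (a - y) = x - y := by abel
  have e2 : (t+s)⁻¹ • (t • (a - y) - s • (x - a)) = a - (t+s)⁻¹ • (s • x + t • y) := by
    have : a = (t+s)⁻¹ • ((t + s) • a) := by
      rw [smul_smul, inv_mul_cancel₀ (by positivity), one_smul]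
    conv_rhs => rw [this]
    rw [← smul_sub]
    congr 1
    module
  rw [e1, e2] at hk
  unfold Gk
  have hc : (4 * Real.pi * t) ^ (-(d : ℝ) / 2) * (4 * Real.pi * s) ^ (-(d : ℝ) / 2) =
     (4 * Real.pi * (t+s)) ^ (-(d : ℝ) / 2) * (4 * Real.pi * (t * s / (t + s))) ^ (-(d : ℝ) / 2) := by
    rw [← Real.mul_rpow (by positivity) (by positivity),
      ← Real.mul_rpow (by positivity) (by positivity)]
    congr 1
    field_simp
  have he : Real.exp (-‖x - a‖ ^ 2 / (4 * t)) * Real.exp (-‖a - y‖ ^ 2 / (4 * s)) =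
     Real.exp (-‖x - y‖ ^ 2 / (4 * (t+s))) * Real.exp (-‖a - (t+s)⁻¹ • (s • x + t • y)‖ ^ 2 / (4 * (t * s / (t + s)))) := by
    rw [← Real.exp_add, ← Real.exp_add]
    congr 1
    simp only [neg_div]
    linarith
  rw [mul_mul_mul_comm, hc, he, mul_mul_mul_comm]

lemma integrable_Gk_mul {d : ℕ} {s t : ℝ} (hs : 0 < s) (ht : 0 < t)
    (x y : EuclideanSpace ℝ (Fin d)) :
    Integrable (fun a => Gk t (x - a) * Gk s (a - y)) := by
  simp only [Gk_mul hs ht x y]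
  exact ((integrable_Gk0 (by positivity)).comp_sub_right _).const_mul _

lemma integral_Gk_mul {d : ℕ} {s t : ℝ} (hs : 0 < s) (ht : 0 < t)
    (x y : EuclideanSpace ℝ (Fin d)) :
    ∫ a, Gk t (x - a) * Gk s (a - y) = Gk (t + s) (x - y) := by
  simp only [Gk_mul hs ht x y]
  rw [integral_const_mul, integral_sub_right_eq_self (fun z => Gk _ z), integral_Gk0 (by positivity),
    mul_one]

/-- Functions integrable against all Gaussians. -/
def Good {d : ℕ} (w : EuclideanSpace ℝ (Fin d) → ℝ) : Prop :=
  AEStronglyMeasurable w volume ∧ ∀ (s : ℝ), 0 < s → Integrable (fun y => Gk s y * w y)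

lemma Gk_shift {d : ℕ} {s : ℝ} (hs : 0 < s) (x : EuclideanSpace ℝ (Fin d)) :
    ∃ C : ℝ, ∀ y, Gk s (x - y) ≤ C * Gk (2 * s) y := by
  refine ⟨(4 * Real.pi * s) ^ (-(d : ℝ) / 2) * Real.exp (‖x‖^2/(4*s)) *
    ((4 * Real.pi * (2 * s)) ^ (-(d : ℝ) / 2))⁻¹, fun y => ?_⟩
  unfold Gk
  have hp : (0:ℝ) < (4 * Real.pi * (2 * s)) ^ (-(d : ℝ) / 2) := by positivity
  rw [mul_assoc _ (_⁻¹), inv_mul_cancel_left₀ hp.ne', mul_assoc _ (Real.exp _) (Real.exp _),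
    ← Real.exp_add]
  gcongr
  have : ‖y‖^2 ≤ 2 * ‖x - y‖^2 + 2 * ‖x‖^2 := by
    have h1 : ‖y‖ ≤ ‖x - y‖ + ‖x‖ := by
      have : y = x - (x - y) := by abel
      calc ‖y‖ = ‖x - (x-y)‖ := by rw [← this]
        _ ≤ ‖x‖ + ‖x - y‖ := norm_sub_le _ _
        _ = _ := add_comm _ _
    nlinarith [norm_nonneg y, norm_nonneg x, norm_nonneg (x - y), sq_nonneg (‖x-y‖ - ‖x‖)]
  rw [← sub_nonneg]
  have : ‖x‖ ^ 2 / (4 * s) + -‖y‖ ^ 2 / (4 * (2 * s)) - -‖x - y‖ ^ 2 / (4 * s) =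
    (2 * ‖x - y‖^2 + 2 * ‖x‖^2 - ‖y‖^2) / (8 * s) := by field_simp; ring
  rw [this]
  apply div_nonneg <;> linarith

lemma Good.integrable {d : ℕ} {w : EuclideanSpace ℝ (Fin d) → ℝ} (hw : Good w) {s : ℝ} (hs : 0 < s)
    (x : EuclideanSpace ℝ (Fin d)) : Integrable (fun y => Gk s (x - y) * w y) := by
  obtain ⟨C, hC⟩ := Gk_shift hs x
  refine ((hw.2 (2*s) (by positivity)).norm.const_mul C).mono' ?_ ?_
  · exact (((Gk_cont s).comp (continuous_const.sub continuous_id)).aestronglyMeasurable).mul hw.1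
  · refine Filter.Eventually.of_forall fun y => ?_
    rw [norm_mul, norm_mul, Real.norm_of_nonneg (Gk_pos hs _).le, 
      Real.norm_of_nonneg (Gk_pos (by positivity) _).le, ← mul_assoc]
    exact mul_le_mul_of_nonneg_right (hC y) (norm_nonneg _)

lemma Good.of_sq {d : ℕ} {w : EuclideanSpace ℝ (Fin d) → ℝ} (hm : AEStronglyMeasurable w volume)
    (hw : Good (fun y => w y ^ 2)) : Good w := by
  refine ⟨hm, fun s hs => ?_⟩
  refine ((integrable_Gk0 hs).add (hw.2 s hs)).mono' ((Gk_cont s).aestronglyMeasurable.mul hm) ?_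
  refine Filter.Eventually.of_forall fun y => ?_
  rw [norm_mul, Real.norm_of_nonneg (Gk_pos hs _).le]
  have : ‖w y‖ ≤ 1 + w y ^ 2 := by
    rw [Real.norm_eq_abs, ← sq_abs (w y)]; nlinarith [sq_nonneg (|w y| - 1), abs_nonneg (w y)]
  have := mul_le_mul_of_nonneg_left this (Gk_pos hs y).le
  simp only [Pi.add_apply]
  linarith

lemma good_prod {d : ℕ} {w : EuclideanSpace ℝ (Fin d) → ℝ} (hw : Good w) {s t : ℝ} (hs : 0 < s)
    (ht : 0 < t) (x : EuclideanSpace ℝ (Fin d)) :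
    Integrable (Function.uncurry fun a y => Gk t (x - a) * (Gk s (a - y) * w y))
      (volume.prod volume) := by
  have hm : AEStronglyMeasurable (Function.uncurry fun a y : EuclideanSpace ℝ (Fin d) =>
      Gk t (x - a) * (Gk s (a - y) * w y)) (volume.prod volume) := by
    have h1 : Continuous (fun p : EuclideanSpace ℝ (Fin d) × EuclideanSpace ℝ (Fin d) =>
      Gk t (x - p.1)) := (Gk_cont t).comp (by fun_prop)
    have h2 : Continuous (fun p : EuclideanSpace ℝ (Fin d) × EuclideanSpace ℝ (Fin d) =>
      Gk s (p.1 - p.2)) := (Gk_cont s).comp (by fun_prop)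
    exact h1.aestronglyMeasurable.mul (h2.aestronglyMeasurable.mul hw.1.comp_snd)
  rw [integrable_prod_iff' hm]
  constructor
  · refine Filter.Eventually.of_forall fun y => ?_
    simp only [Function.uncurry, ← mul_assoc]
    exact (integrable_Gk_mul hs ht x y).mul_const _
  · have : ∀ y, ∫ a, ‖Function.uncurry (fun a y => Gk t (x - a) * (Gk s (a - y) * w y)) (a, y)‖
        = ‖Gk (t+s) (x - y) * w y‖ := by
      intro y
      simp only [Function.uncurry, ← mul_assoc, norm_mul (_ * _) (w y), integral_mul_const,
        norm_mul (Gk (t+s) (x - y)), Real.norm_of_nonneg (Gk_pos (add_pos ht hs) (x - y)).le]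
      congr 1
      rw [← integral_Gk_mul hs ht x y]
      refine integral_congr_ae (Filter.Eventually.of_forall fun a => ?_)
      exact Real.norm_of_nonneg (mul_pos (Gk_pos ht _) (Gk_pos hs _)).le
    simp only [this]
    exact (hw.integrable (add_pos ht hs) x).norm

lemma heat_semigroup {d : ℕ} {w : EuclideanSpace ℝ (Fin d) → ℝ} (hw : Good w) {s t : ℝ} (hs : 0 < s)
    (ht : 0 < t) (x : EuclideanSpace ℝ (Fin d)) :
    heatExt (heatExt w s) t x = heatExt w (t + s) x := by
  simp only [heatExt_eq]
  simp only [← integral_const_mul]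
  rw [integral_integral_swap (good_prod hw hs ht x)]
  simp only [← mul_assoc, integral_mul_const, integral_Gk_mul hs ht]

lemma Good.heat {d : ℕ} {w : EuclideanSpace ℝ (Fin d) → ℝ} (hw : Good w) {s : ℝ} (hs : 0 < s) :
    Good (heatExt w s) := by
  constructor
  · have : heatExt w s = fun x => ∫ y, Gk s (x - y) * w y := by
      ext x; exact heatExt_eq _ _ _
    rw [this]
    have h2 : Continuous (fun p : EuclideanSpace ℝ (Fin d) × EuclideanSpace ℝ (Fin d) =>
      Gk s (p.1 - p.2)) := (Gk_cont s).comp (by fun_prop)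
    exact (h2.aestronglyMeasurable.mul hw.1.comp_snd :
      AEStronglyMeasurable (fun p : EuclideanSpace ℝ (Fin d) × EuclideanSpace ℝ (Fin d) =>
       Gk s (p.1 - p.2) * w p.2) (volume.prod volume)).integral_prod_right'
  · intro t ht
    have := (good_prod hw hs ht 0).integral_prod_left
    simp only [Function.uncurry, integral_const_mul] at this
    refine this.congr (Filter.Eventually.of_forall fun a => ?_)
    simp only [heatExt_eq]
    congr 1
    simp [Gk]

lemma heat_const {d : ℕ} {s : ℝ} (hs : 0 < s) (c : ℝ) (x : EuclideanSpace ℝ (Fin d)) :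
    heatExt (fun _ => c) s x = c := by
  rw [heatExt_eq, integral_mul_const, integral_Gk hs, one_mul]

lemma heat_var {d : ℕ} {w : EuclideanSpace ℝ (Fin d) → ℝ} (hw : Good w)
    (hw2 : Good (fun y => w y ^ 2)) {s : ℝ} (hs : 0 < s) (x : EuclideanSpace ℝ (Fin d)) (c : ℝ) :
    Integrable (fun y => Gk s (x - y) * (w y - c)^2) ∧
    ∫ y, Gk s (x - y) * (w y - c)^2 = heatExt (fun y => w y ^ 2) s x
      - 2 * c * heatExt w s x + c^2 := by
  have e : (fun y => Gk s (x - y) * (w y - c)^2) = fun y => (Gk s (x - y) * w y ^ 2 -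
      (2 * c) * (Gk s (x - y) * w y)) + c^2 * Gk s (x - y) := by
    ext y; ring
  have i1 := hw2.integrable hs x
  have i2 := (hw.integrable hs x).const_mul (2*c)
  have i3 := (integrable_Gk hs x).const_mul (c^2)
  rw [e]
  refine ⟨(i1.sub i2).add i3, ?_⟩
  have h4 := integral_add (i1.sub i2) i3
  simp only [Pi.sub_apply] at h4
  rw [h4, integral_sub i1 i2, integral_const_mul, integral_const_mul,
    integral_Gk hs, heatExt_eq, heatExt_eq, mul_one]

lemma heat_sq_le {d : ℕ} {w : EuclideanSpace ℝ (Fin d) → ℝ} (hw : Good w)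
    (hw2 : Good (fun y => w y ^ 2)) {s : ℝ} (hs : 0 < s) (x : EuclideanSpace ℝ (Fin d)) :
    heatExt w s x ^ 2 ≤ heatExt (fun y => w y ^ 2) s x := by
  have h := (heat_var hw hw2 hs x (heatExt w s x)).2
  have : 0 ≤ ∫ y, Gk s (x - y) * (w y - heatExt w s x)^2 :=
    integral_nonneg fun y => mul_nonneg (Gk_pos hs _).le (sq_nonneg _)
  nlinarith

lemma Good.heat_sq {d : ℕ} {w : EuclideanSpace ℝ (Fin d) → ℝ} (hw : Good w)
    (hw2 : Good (fun y => w y ^ 2)) {s : ℝ} (hs : 0 < s) : Good (fun y => heatExt w s y ^ 2) := by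
  refine ⟨(hw.heat hs).1.pow 2, fun t ht => ?_⟩
  refine ((hw2.heat hs).2 t ht).mono' ((Gk_cont t).aestronglyMeasurable.mul ((hw.heat hs).1.pow 2)) ?_
  refine Filter.Eventually.of_forall fun y => ?_
  rw [Real.norm_of_nonneg (mul_nonneg (Gk_pos ht _).le (sq_nonneg _))]
  exact mul_le_mul_of_nonneg_left (heat_sq_le hw hw2 hs y) (Gk_pos ht _).le

lemma Gk_sq_shift {d : ℕ} {s : ℝ} (hs : 0 < s) (z e : EuclideanSpace ℝ (Fin d)) (he : ‖e‖ = 1)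
    (h : ℝ) :
    Real.exp (h^2/(2*s)) * Gk s (z + (2*h) • e) * Gk s z = Gk s (z + h • e) ^ 2 := by
  unfold Gk
  have : Real.exp (h^2/(2*s)) * Real.exp (-‖z + (2*h) • e‖ ^ 2 / (4 * s)) *
      Real.exp (-‖z‖ ^ 2 / (4 * s)) = Real.exp (-‖z + h • e‖ ^ 2 / (4 * s)) ^ 2 := by
    rw [← Real.exp_add, ← Real.exp_add, ← Real.exp_nat_mul]
    congr 1
    rw [norm_add_sq_real, norm_add_sq_real, norm_smul, norm_smul, he, inner_smul_right,
      inner_smul_right]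
    simp only [Real.norm_eq_abs, mul_one, sq_abs]
    push_cast
    field_simp
    ring
  rw [mul_pow, ← this]
  ring

lemma diff_bound {d : ℕ} {u : EuclideanSpace ℝ (Fin d) → ℝ} (hu : Good u)
    (hu2 : Good (fun y => u y ^ 2)) {s : ℝ} (hs : 0 < s) (x e : EuclideanSpace ℝ (Fin d))
    (he : ‖e‖ = 1) (h : ℝ) :
    (heatExt u s (x + h • e) - heatExt u s x)^2 ≤
      (Real.exp (h^2/(2*s)) - 1) * (heatExt (fun y => u y ^ 2) s x - heatExt u s x ^ 2) := by
  set c := heatExt u s x with hc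
  set V := heatExt (fun y => u y ^ 2) s x - c ^ 2 with hV
  set D := heatExt u s (x + h • e) - c with hD
  set q := fun y => Real.exp (h^2/(2*s)) * Gk s (x + (2*h) • e - y) - 2 * Gk s (x + h • e - y)
    + Gk s (x - y) with hq
  have hqi : Integrable q := (((integrable_Gk hs _).const_mul _).sub
    ((integrable_Gk hs _).const_mul _)).add (integrable_Gk hs _)
  have hqI : ∫ y, q y = Real.exp (h^2/(2*s)) - 1 := by
    have h4 := integral_add (((integrable_Gk hs (x + (2*h) • e)).const_mul
      (Real.exp (h^2/(2*s)))).sub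
      ((integrable_Gk hs (x + h • e)).const_mul 2)) (integrable_Gk hs x)
    simp only [Pi.sub_apply] at h4
    rw [hq, h4, integral_sub ((integrable_Gk hs _).const_mul _) ((integrable_Gk hs _).const_mul _),
      integral_const_mul, integral_const_mul, integral_Gk hs, integral_Gk hs, integral_Gk hs]
    ring
  set p := fun y => (Gk s (x + h • e - y) - Gk s (x - y)) * (u y - c) with hp
  have hpe : p = fun y => ((Gk s (x + h • e - y) * u y) - c * Gk s (x + h • e - y))
      - ((Gk s (x - y) * u y) - c * Gk s (x - y)) := by
    ext y; simp only [hp]; ring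
  have j1 : ∀ x, Integrable fun y => (Gk s (x - y) * u y) - c * Gk s (x - y) := fun x =>
    (hu.integrable hs x).sub ((integrable_Gk hs x).const_mul c)
  have hpi : Integrable p := by
    rw [hpe]; exact (j1 _).sub (j1 _)
  have hpI : ∫ y, p y = D := by
    have j2 : ∀ x, ∫ y, ((Gk s (x - y) * u y) - c * Gk s (x - y)) = heatExt u s x - c := by
      intro x
      rw [integral_sub (hu.integrable hs x) ((integrable_Gk hs x).const_mul c),
        integral_const_mul, integral_Gk hs, heatExt_eq, mul_one]
    rw [hpe, integral_sub (j1 _) (j1 _), j2, j2]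
    simp [hD, hc]
  obtain ⟨hri, hrI⟩ := heat_var hu hu2 hs x c
  have hrI' : ∫ y, Gk s (x - y) * (u y - c)^2 = V := by
    rw [hrI, hV, ← hc]; ring
  have key : ∀ l : ℝ, 0 ≤ (Real.exp (h^2/(2*s)) - 1) * (l * l) + (-2 * D) * l + V := by
    intro l
    have h0 : 0 ≤ ∫ y, (((l * l) * q y + (-2 * l) * p y) + Gk s (x - y) * (u y - c)^2) := by
      refine integral_nonneg fun y => ?_
      have hG := Gk_pos hs (x - y)
      have hs' := Gk_sq_shift hs (x - y) e he h
      have e1 : x - y + (2*h) • e = x + (2*h) • e - y := by abel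
      have e2 : x - y + h • e = x + h • e - y := by abel
      rw [e1, e2] at hs'
      have hq' : q y * Gk s (x - y) = (Gk s (x + h • e - y) - Gk s (x - y))^2 := by
        simp only [hq]
        linear_combination hs'
      refine nonneg_of_mul_nonneg_left (b := Gk s (x - y)) ?_ hG
      have : ((l * l) * q y + (-2 * l) * p y + Gk s (x - y) * (u y - c)^2) * Gk s (x - y)
        = (l * (Gk s (x + h • e - y) - Gk s (x - y)) - Gk s (x - y) * (u y - c))^2 := by
        simp only [hp]
        linear_combination (l * l) * hq'
      rw [this]
      exact sq_nonneg _
    have h4 := integral_add ((hqi.const_mul (l*l)).add (hpi.const_mul (-2*l))) hri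
    simp only [Pi.add_apply] at h4
    rw [h4, integral_add (hqi.const_mul _) (hpi.const_mul _),
      integral_const_mul, integral_const_mul, hqI, hpI, hrI'] at h0
    linarith
  have := discrim_le_zero key
  unfold discrim at this
  nlinarith

lemma grad_bound {d : ℕ} {u : EuclideanSpace ℝ (Fin d) → ℝ} (hu : Good u)
    (hu2 : Good (fun y => u y ^ 2)) {s : ℝ} (hs : 0 < s) (x : EuclideanSpace ℝ (Fin d))
    (i : Fin d) :
    (pd i (heatExt u s) x)^2 ≤ 
      (heatExt (fun y => u y ^ 2) s x - heatExt u s x ^ 2) / (2 * s) := by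
  have hV := sub_nonneg.2 (heat_sq_le hu hu2 hs x)
  by_cases hd : DifferentiableAt ℝ (heatExt u s) x
  · set e : EuclideanSpace ℝ (Fin d) := EuclideanSpace.single i 1 with he
    have hne : ‖e‖ = 1 := by simp [he]
    have h1 : HasDerivAt (fun h : ℝ => heatExt u s (x + h • e)) (pd i (heatExt u s) x) 0 :=
      hd.hasFDerivAt.hasLineDerivAt e
    rw [hasDerivAt_iff_tendsto_slope] at h1
    have h2 := h1.pow 2
    set V := heatExt (fun y => u y ^ 2) s x - heatExt u s x ^ 2 with hVd
    have h3 : Filter.Tendsto (fun h : ℝ => Real.exp (h^2/(2*s)) * V / (2 * s)) (nhdsWithin 0 {0}ᶜ)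
        (nhds (V / (2*s))) := by
      have : Continuous (fun h : ℝ => Real.exp (h^2/(2*s)) * V / (2 * s)) := by fun_prop
      have := this.tendsto 0
      simp only [ne_eq, OfNat.ofNat_ne_zero, not_false_eq_true, zero_pow, zero_div, Real.exp_zero,
        one_mul] at this
      exact this.mono_left nhdsWithin_le_nhds
    refine le_of_tendsto_of_tendsto h2 h3 ?_
    filter_upwards [self_mem_nhdsWithin] with h hh
    have hh : h ≠ 0 := hh
    have h4 := diff_bound hu hu2 hs x e hne h
    have hexp : Real.exp (h^2/(2*s)) - 1 ≤ h^2/(2*s) * Real.exp (h^2/(2*s)) := by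
      have h5 := Real.add_one_le_exp (-(h^2/(2*s)))
      have h6 := mul_le_mul_of_nonneg_right h5 (Real.exp_pos (h^2/(2*s))).le
      rw [← Real.exp_add, neg_add_cancel, Real.exp_zero] at h6
      linarith
    have h7 := h4.trans (mul_le_mul_of_nonneg_right hexp hV)
    rw [slope_def_field]
    simp only [zero_smul, add_zero, sub_zero]
    rw [div_pow, div_le_iff₀ (by positivity)]
    refine h7.trans (le_of_eq ?_)
    ring
  · unfold pd
    rw [fderiv_zero_of_not_differentiableAt hd]
    simp only [zero_apply, ne_eq, OfNat.ofNat_ne_zero, not_false_eq_true,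
      zero_pow]
    positivity

/-- the interpolating functional -/
def Phi {d : ℕ} (w : EuclideanSpace ℝ (Fin d) → ℝ) (T : ℝ) (x₀ : EuclideanSpace ℝ (Fin d))
    (s : ℝ) : ℝ := heatExt (fun y => heatExt w s y ^ 2) (T - s) x₀

lemma Phi_diff {d : ℕ} {w : EuclideanSpace ℝ (Fin d) → ℝ} (hw : Good w)
    (hw2 : Good (fun y => w y ^ 2)) {T s r : ℝ} (x₀ : EuclideanSpace ℝ (Fin d))
    (hr : 0 < r) (hrs : r < s) (hsT : s < T) :
    let V := fun y => heatExt (fun y => heatExt w r y ^ 2) (s - r) y -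
      heatExt (heatExt w r) (s - r) y ^ 2
    (∀ y, 0 ≤ V y) ∧ Integrable (fun y => Gk (T - s) (x₀ - y) * V y) ∧
    Phi w T x₀ r - Phi w T x₀ s = ∫ y, Gk (T - s) (x₀ - y) * V y := by
  intro V
  have hur := hw.heat hr
  have hur2 := hw.heat_sq hw2 hr
  have hsr := sub_pos.2 hrs
  have hTs := sub_pos.2 hsT
  have i1 := (hur2.heat hsr).integrable hTs x₀
  have i2 := (hur.heat_sq hur2 hsr).integrable hTs x₀
  have e : (fun y => Gk (T - s) (x₀ - y) * V y) = fun y =>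
      Gk (T - s) (x₀ - y) * heatExt (fun y => heatExt w r y ^ 2) (s - r) y -
      Gk (T - s) (x₀ - y) * heatExt (heatExt w r) (s - r) y ^ 2 := by
    ext y; simp only [V]; ring
  refine ⟨fun y => sub_nonneg.2 (heat_sq_le hur hur2 hsr y), ?_, ?_⟩
  · rw [e]; exact i1.sub i2
  · rw [e, integral_sub i1 i2, ← heatExt_eq, ← heatExt_eq, heat_semigroup hur2 hsr hTs]
    unfold Phi
    congr 2
    · ring
    · ext y
      rw [heat_semigroup hw hr hsr]
      congr 2
      ring

lemma Phi_antitone {d : ℕ} {w : EuclideanSpace ℝ (Fin d) → ℝ} (hw : Good w)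
    (hw2 : Good (fun y => w y ^ 2)) {T s r : ℝ} (x₀ : EuclideanSpace ℝ (Fin d))
    (hr : 0 < r) (hrs : r ≤ s) (hsT : s < T) : Phi w T x₀ s ≤ Phi w T x₀ r := by
  rcases hrs.eq_or_lt with rfl | h
  · rfl
  obtain ⟨h1, h2, h3⟩ := Phi_diff hw hw2 x₀ hr h hsT
  rw [← sub_nonneg, h3]
  exact integral_nonneg fun y => mul_nonneg (Gk_pos (by linarith) _).le (h1 y)

lemma Phi_nonneg {d : ℕ} {w : EuclideanSpace ℝ (Fin d) → ℝ} {T s : ℝ}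
    (x₀ : EuclideanSpace ℝ (Fin d)) (hsT : s < T) : 0 ≤ Phi w T x₀ s := by
  unfold Phi
  rw [heatExt_eq]
  exact integral_nonneg fun y => mul_nonneg (Gk_pos (by linarith) _).le (sq_nonneg _)

lemma Phi_le {d : ℕ} {w : EuclideanSpace ℝ (Fin d) → ℝ} (hw : Good w)
    (hw2 : Good (fun y => w y ^ 2)) {T s : ℝ} (x₀ : EuclideanSpace ℝ (Fin d))
    (hs : 0 < s) (hsT : s < T) : Phi w T x₀ s ≤ heatExt (fun y => w y ^ 2) T x₀ := by
  have hTs := sub_pos.2 hsT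
  have : heatExt (fun y => w y ^ 2) T x₀ =
      heatExt (heatExt (fun y => w y ^ 2) s) (T - s) x₀ := by
    rw [heat_semigroup hw2 hs hTs]; congr 1; ring
  rw [this]
  unfold Phi
  rw [heatExt_eq, heatExt_eq]
  refine integral_mono ((hw.heat_sq hw2 hs).integrable hTs x₀) ((hw2.heat hs).integrable hTs x₀) ?_
  intro y
  exact mul_le_mul_of_nonneg_left (heat_sq_le hw hw2 hs y) (Gk_pos hTs _).le

lemma F_bound {d : ℕ} {w : EuclideanSpace ℝ (Fin d) → ℝ} (hw : Good w)
    (hw2 : Good (fun y => w y ^ 2)) {t R : ℝ} (x₀ : EuclideanSpace ℝ (Fin d))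
    (hR : 0 < R) (ht : 0 < t) (htR : t ≤ R^2) :
    ∫ y in ball x₀ R, ∑ i, (pd i (heatExt w t) y) ^ 2 ≤
      (d * ((8 * Real.pi * R^2) ^ ((d:ℝ)/2) * Real.exp (1/4))) *
        (Phi w (2*R^2) x₀ (t/2) - Phi w (2*R^2) x₀ t) / t := by
  have hR2 : 0 < R^2 := by positivity
  obtain ⟨h1, h2, h3⟩ := Phi_diff hw hw2 x₀ (half_pos ht) (half_lt_self ht)
    (show t < 2 * R^2 by linarith)
  have hTt : 0 < 2 * R^2 - t := by linarith
  set A := (8 * Real.pi * R^2) ^ ((d:ℝ)/2) * Real.exp (1/4) with hA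
  have hA0 : 0 < A := by positivity
  set V := fun y => heatExt (fun y => heatExt w (t/2) y ^ 2) (t - t/2) y -
      heatExt (heatExt w (t/2)) (t - t/2) y ^ 2 with hV
  have hpt : ∀ y ∈ ball x₀ R, ∑ i, (pd i (heatExt w t) y) ^ 2 ≤
      (d * A / t) * (Gk (2*R^2 - t) (x₀ - y) * V y) := by
    intro y hy
    have e1 : heatExt w t = heatExt (heatExt w (t/2)) (t - t/2) := by
      ext z
      rw [heat_semigroup hw (half_pos ht) (by linarith)]
      congr 1; ring
    have b1 : ∀ i : Fin d, (pd i (heatExt w t) y) ^ 2 ≤ V y / t := by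
      intro i
      have := grad_bound (hw.heat (half_pos ht)) (hw.heat_sq hw2 (half_pos ht))
        (show 0 < t - t/2 by linarith) y i
      rw [← e1] at this
      refine this.trans (le_of_eq ?_)
      simp only [hV]
      rw [← e1]
      congr 1
      ring
    have b2 : ∑ i, (pd i (heatExt w t) y) ^ 2 ≤ d * (V y / t) := by
      refine (Finset.sum_le_sum fun i _ => b1 i).trans (le_of_eq ?_)
      simp
    have b3 : 1 ≤ A * Gk (2*R^2 - t) (x₀ - y) := by
      unfold Gk
      have hn : ‖x₀ - y‖ < R := by
        rw [← dist_eq_norm, dist_comm]; exact hy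
      have c1 : (8 * Real.pi * R^2) ^ (-(d:ℝ)/2) ≤ (4 * Real.pi * (2*R^2 - t)) ^ (-(d:ℝ)/2) := by
        refine Real.rpow_le_rpow_of_nonpos (by positivity) ?_ ?_
        · nlinarith [Real.pi_pos]
        · have : (0:ℝ) ≤ d := by positivity
          linarith
      have c2 : Real.exp (-(1/4)) ≤ Real.exp (-‖x₀ - y‖ ^ 2 / (4 * (2*R^2 - t))) := by
        apply Real.exp_le_exp.2
        rw [neg_div, neg_le_neg_iff, div_le_div_iff₀ (by linarith) (by norm_num)]
        nlinarith [norm_nonneg (x₀ - y)]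
      calc (1:ℝ) = A * ((8 * Real.pi * R^2) ^ (-(d:ℝ)/2) * Real.exp (-(1/4))) := by
            rw [hA, mul_mul_mul_comm, ← Real.exp_add, ← Real.rpow_add (by positivity)]
            have : (d:ℝ)/2 + -(d:ℝ)/2 = 0 := by ring
            rw [this]; simp
        _ ≤ _ := by gcongr
    refine b2.trans ?_
    have : d * (V y / t) * 1 ≤ d * (V y / t) * (A * Gk (2*R^2 - t) (x₀ - y)) := by
      refine mul_le_mul_of_nonneg_left b3 ?_
      have := h1 y
      positivity
    refine le_trans (by linarith) (this.trans (le_of_eq ?_))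
    ring
  have hnn : ∀ y, 0 ≤ (d * A / t) * (Gk (2*R^2 - t) (x₀ - y) * V y) := fun y =>
    mul_nonneg (by positivity) (mul_nonneg (Gk_pos hTt _).le (h1 y))
  calc ∫ y in ball x₀ R, ∑ i, (pd i (heatExt w t) y) ^ 2
      ≤ ∫ y in ball x₀ R, (d * A / t) * (Gk (2*R^2 - t) (x₀ - y) * V y) := by
        refine integral_mono_of_nonneg ?_ (h2.const_mul _).integrableOn ?_
        · exact Filter.Eventually.of_forall fun y => Finset.sum_nonneg fun i _ => sq_nonneg _
        · exact (ae_restrict_iff' measurableSet_ball).2 (Filter.Eventually.of_forall hpt)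
    _ ≤ ∫ y, (d * A / t) * (Gk (2*R^2 - t) (x₀ - y) * V y) :=
        setIntegral_le_integral (h2.const_mul _) (Filter.Eventually.of_forall hnn)
    _ = _ := by
        rw [integral_const_mul, ← h3]; ring

lemma time_integral {F Φ : ℝ → ℝ} {b B S : ℝ} (hB : 0 ≤ B)
    (hF : ∀ t, 0 < t → t ≤ b → F t ≤ B * (Φ (t/2) - Φ t) / t)
    (hΦ : ∀ r s, 0 < r → r ≤ s → s ≤ b → Φ s ≤ Φ r) (h0 : ∀ t, 0 < t → t ≤ b → 0 ≤ Φ t)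
    (hS : ∀ t, 0 < t → t ≤ b → Φ t ≤ S) (hS0 : 0 ≤ S) :
    ∫ t in Ioc 0 b, F t ≤ B * S := by
  by_cases hi : IntegrableOn F (Ioc 0 b)
  swap
  · rw [integral_undef hi]; positivity
  have main : ∀ a, 0 < a → a ≤ b → ∫ t in Ioc a b, F t ≤ B * S := by
    intro a ha hab
    set ψ := fun t => Φ t / t with hψ
    have hanti : AntitoneOn ψ (Ioc 0 b) := by
      intro r hr s hs hrs
      simp only [hψ]
      exact div_le_div₀ (h0 r hr.1 hr.2) (hΦ r s hr.1 hrs hs.2) hr.1 hrs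
    have hint : ∀ p q, 0 < p → 0 < q → p ≤ b → q ≤ b → IntervalIntegrable ψ volume p q := by
      intro p q hp hq hpb hqb
      apply AntitoneOn.intervalIntegrable
      refine hanti.mono fun z hz => ?_
      rw [mem_uIcc] at hz
      rcases hz with hz | hz
      · exact ⟨by linarith, by linarith⟩
      · exact ⟨by linarith, by linarith⟩
    have hb : 0 < b := by linarith
    have I1 : IntervalIntegrable (fun t => B * (ψ (t/2) / 2)) volume a b := by
      have := (hint (a/2) (b/2) (by linarith) (by linarith) (by linarith) (by linarith)).comp_mul_left
        (c := 1/2)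
      have h2 : IntervalIntegrable (fun x => ψ (1/2 * x)) volume a b := by
        convert this using 1 <;> ring
      convert (h2.div_const 2).const_mul B using 3
      congr 1; ring
    have I2 : IntervalIntegrable (fun t => B * ψ t) volume a b :=
      (hint a b ha hb hab le_rfl).const_mul B
    have step1 : ∫ t in Ioc a b, F t ≤ ∫ t in a..b, (B * (ψ (t/2) / 2) - B * ψ t) := by
      rw [← intervalIntegral.integral_of_le hab]
      refine intervalIntegral.integral_mono_on hab ?_ (I1.sub I2) ?_
      · rw [intervalIntegrable_iff_integrableOn_Ioc_of_le hab]
        exact hi.mono_set (Ioc_subset_Ioc_left ha.le)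
      · intro t ht
        have ht0 : 0 < t := lt_of_lt_of_le ha ht.1
        refine (hF t ht0 ht.2).trans (le_of_eq ?_)
        simp only [hψ]
        field_simp
    refine step1.trans ?_
    rw [intervalIntegral.integral_sub I1 I2, intervalIntegral.integral_const_mul,
      intervalIntegral.integral_const_mul, intervalIntegral.integral_div,
      intervalIntegral.integral_comp_div _ (two_ne_zero), smul_eq_mul, ← mul_sub]
    refine mul_le_mul_of_nonneg_left ?_ hB
    have e1 : (2 * ∫ t in a/2..b/2, ψ t) / 2 = ∫ t in a/2..b/2, ψ t := by ring
    rw [e1, intervalIntegral.integral_interval_sub_interval_comm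
      (hint _ _ (by linarith) (by linarith) (by linarith) (by linarith))
      (hint _ _ (by linarith) (by linarith) (by linarith) (by linarith))
      (hint _ _ (by linarith) (by linarith) (by linarith) (by linarith))]
    have p1 : 0 ≤ ∫ t in b/2..b, ψ t := by
      refine intervalIntegral.integral_nonneg (by linarith) fun t ht => ?_
      exact div_nonneg (h0 t (by linarith [ht.1]) ht.2) (by linarith [ht.1])
    have p2 : ∫ t in a/2..a, ψ t ≤ ∫ t in a/2..a, S / (a/2) := by
      refine intervalIntegral.integral_mono_on (by linarith) 
        (hint _ _ (by linarith) (by linarith) (by linarith) (by linarith)) (by simp) fun t ht => ?_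
      exact div_le_div₀ hS0 (hS t (by linarith [ht.1]) (by linarith [ht.2])) (by linarith) ht.1
    rw [intervalIntegral.integral_const, smul_eq_mul] at p2
    have e2 : (a - a/2) * (S / (a/2)) = S := by field_simp; ring
    rw [e2] at p2
    linarith
  rcases le_or_gt b 0 with hb | hb
  · rw [Ioc_eq_empty (by linarith)]; simp; positivity
  have hU : Ioc 0 b = ⋃ n : ℕ, Ioc (b / (n+1)) b := by
    ext t
    simp only [mem_iUnion, mem_Ioc, exists_and_right]
    refine and_congr_left fun _ => ⟨fun h => ?_, ?_⟩
    · obtain ⟨n, hn⟩ := exists_nat_gt (b / t)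
      refine ⟨n, ?_⟩
      rw [div_lt_iff₀ (by positivity)]
      rw [div_lt_iff₀ h] at hn
      nlinarith
    · rintro ⟨n, hn⟩
      exact lt_trans (by positivity) hn
  have hlim := tendsto_setIntegral_of_monotone (μ := volume) (f := F)
    (s := fun n : ℕ => Ioc (b / (n+1)) b) (fun n => measurableSet_Ioc) (by
      intro m n hmn
      apply Ioc_subset_Ioc_left
      have : (m:ℝ) ≤ n := by exact_mod_cast hmn
      gcongr) (by rw [← hU]; exact hi)
  rw [← hU] at hlim
  refine le_of_tendsto hlim (Filter.Eventually.of_forall fun n => main _ (by positivity) ?_)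
  exact div_le_self hb.le (by linarith [(Nat.cast_nonneg n : (0:ℝ) ≤ n)])

lemma carleson_of_good {d : ℕ} {w : EuclideanSpace ℝ (Fin d) → ℝ} (hw : Good w)
    (hw2 : Good (fun y => w y ^ 2)) {R : ℝ} (x₀ : EuclideanSpace ℝ (Fin d)) (hR : 0 < R) :
    ∫ t in Ioc (0:ℝ) (R ^ 2), ∫ y in ball x₀ R, ∑ i, (pd i (heatExt w t) y) ^ 2 ≤
      (d * ((8 * Real.pi * R^2) ^ ((d:ℝ)/2) * Real.exp (1/4))) *
        heatExt (fun y => w y ^ 2) (2*R^2) x₀ := by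
  have hR2 : 0 < R^2 := by positivity
  refine time_integral (Φ := Phi w (2*R^2) x₀) (by positivity)
    (fun t h0 h1 => F_bound hw hw2 x₀ hR h0 h1)
    (fun r s h0 h1 h2 => Phi_antitone hw hw2 x₀ h0 h1 (by linarith))
    (fun t h0 h1 => Phi_nonneg x₀ (by linarith))
    (fun t h0 h1 => Phi_le hw hw2 x₀ h0 (by linarith)) ?_
  exact (Phi_nonneg x₀ (by linarith)).trans (Phi_le hw hw2 x₀ hR2 (by linarith))

/-- mean over a ball -/
def mn {d : ℕ} (v : EuclideanSpace ℝ (Fin d) → ℝ) (x : EuclideanSpace ℝ (Fin d)) (r : ℝ) : ℝ :=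
  ⨍ z in ball x r, v z

/-- volume of ball of radius `r` -/
def vb (d : ℕ) (r : ℝ) : ℝ := r ^ d * volume.real (ball (0 : EuclideanSpace ℝ (Fin d)) 1)

lemma vb_one_pos (d : ℕ) : 0 < volume.real (ball (0 : EuclideanSpace ℝ (Fin d)) 1) := by
  rw [measureReal_def, ENNReal.toReal_pos_iff]
  exact ⟨measure_ball_pos _ _ one_pos, measure_ball_lt_top⟩

lemma vb_pos {d : ℕ} {r : ℝ} (hr : 0 < r) : 0 < vb d r :=
  mul_pos (by positivity) (vb_one_pos d)

lemma vol_ball {d : ℕ} {r : ℝ} (hr : 0 < r) (x : EuclideanSpace ℝ (Fin d)) :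
    volume.real (ball x r) = vb d r := by
  rw [measureReal_def, Measure.addHaar_ball_of_pos _ _ hr, ENNReal.toReal_mul,
    ENNReal.toReal_ofReal (by positivity), vb, measureReal_def]
  simp

lemma vol_ball' {d : ℕ} {r : ℝ} (hr : 0 < r) (x : EuclideanSpace ℝ (Fin d)) :
    volume (ball x r) = ENNReal.ofReal (vb d r) := by
  rw [← vol_ball hr x, measureReal_def, ENNReal.ofReal_toReal measure_ball_lt_top.ne]

lemma vb_mul (d : ℕ) (k r : ℝ) : vb d (k * r) = k ^ d * vb d r := by
  simp only [vb, mul_pow]; ring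

lemma LI.on_ball {d : ℕ} {v : EuclideanSpace ℝ (Fin d) → ℝ} (hv : LocallyIntegrable v volume)
    (x : EuclideanSpace ℝ (Fin d)) (r : ℝ) : IntegrableOn v (ball x r) :=
  (hv.integrableOn_isCompact (isCompact_closedBall x r)).mono_set ball_subset_closedBall

lemma const_on_ball {d : ℕ} (c : ℝ) (x : EuclideanSpace ℝ (Fin d)) (r : ℝ) :
    IntegrableOn (fun _ => c) (ball x r) volume :=
  integrableOn_const measure_ball_lt_top.ne

lemma LI.abs_sub {d : ℕ} {v : EuclideanSpace ℝ (Fin d) → ℝ} (hv : LocallyIntegrable v volume)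
    (x : EuclideanSpace ℝ (Fin d)) (r c : ℝ) : IntegrableOn (fun y => |v y - c|) (ball x r) :=
  ((LI.on_ball hv x r).sub (const_on_ball c x r)).abs

lemma mn_sub_le {d : ℕ} {v : EuclideanSpace ℝ (Fin d) → ℝ} (hv : LocallyIntegrable v volume)
    (x : EuclideanSpace ℝ (Fin d)) {r : ℝ} (hr : 0 < r) (c : ℝ) :
    vb d r * |mn v x r - c| ≤ ∫ y in ball x r, |v y - c| := by
  have h1 : vb d r * (mn v x r - c) = ∫ y in ball x r, (v y - c) := by
    rw [integral_sub (LI.on_ball hv x r) (const_on_ball c x r), mn, setAverage_eq,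
      setIntegral_const, vol_ball hr]
    have := (vb_pos (d := d) hr).ne'
    simp only [smul_eq_mul]
    field_simp
  have h2 : |vb d r * (mn v x r - c)| ≤ ∫ y in ball x r, |v y - c| := by
    rw [h1]; exact abs_integral_le_integral_abs
  rwa [abs_mul, abs_of_pos (vb_pos hr)] at h2

/-- BMO bound in integral form. -/
def HB {d : ℕ} (v : EuclideanSpace ℝ (Fin d) → ℝ) (M : ℝ) : Prop :=
  ∀ (x : EuclideanSpace ℝ (Fin d)) (r : ℝ), 0 < r →
    ∫ y in ball x r, |v y - mn v x r| ≤ M * vb d r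

lemma HB_of {d : ℕ} {v : EuclideanSpace ℝ (Fin d) → ℝ} {M : ℝ}
    (h : ∀ (x : EuclideanSpace ℝ (Fin d)) (r : ℝ), 0 < r →
          (⨍ y in ball x r, |v y - ⨍ z in ball x r, v z|) ≤ M) : HB v M := by
  intro x r hr
  have := h x r hr
  rw [setAverage_eq, vol_ball hr, smul_eq_mul, inv_mul_le_iff₀ (vb_pos hr)] at this
  rw [mul_comm M]
  exact this

lemma int_abs_le {d : ℕ} {v : EuclideanSpace ℝ (Fin d) → ℝ} (hv : LocallyIntegrable v volume)
    (x : EuclideanSpace ℝ (Fin d)) {r : ℝ} (hr : 0 < r) (c c' : ℝ) :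
    ∫ y in ball x r, |v y - c| ≤ (∫ y in ball x r, |v y - c'|) + vb d r * |c' - c| := by
  have : ∫ y in ball x r, |v y - c| ≤ ∫ y in ball x r, (|v y - c'| + |c' - c|) := by
    refine integral_mono (LI.abs_sub hv x r c) ((LI.abs_sub hv x r c').add (const_on_ball _ x r)) ?_
    intro y
    exact abs_sub_le _ _ _
  rwa [integral_add (LI.abs_sub hv x r c') (const_on_ball _ x r), setIntegral_const,
    vol_ball hr, smul_eq_mul] at this

lemma mn_double {d : ℕ} {v : EuclideanSpace ℝ (Fin d) → ℝ} (hv : LocallyIntegrable v volume)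
    {M : ℝ} (hB : HB v M) (x : EuclideanSpace ℝ (Fin d)) {r : ℝ} (hr : 0 < r) :
    |mn v x r - mn v x (2*r)| ≤ 2^d * M := by
  have h1 := mn_sub_le hv x hr (mn v x (2*r))
  have h2 := hB x (2*r) (by positivity)
  have h3 : ∫ y in ball x r, |v y - mn v x (2*r)| ≤ ∫ y in ball x (2*r), |v y - mn v x (2*r)| :=
    setIntegral_mono_set (LI.abs_sub hv _ _ _) (Filter.Eventually.of_forall fun y => abs_nonneg _)
      (ball_subset_ball (by linarith)).eventuallyLE
  rw [vb_mul] at h2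
  have := vb_pos (d := d) hr
  rw [← mul_le_mul_iff_right₀ this]
  linarith

lemma int_double {d : ℕ} {v : EuclideanSpace ℝ (Fin d) → ℝ} (hv : LocallyIntegrable v volume)
    {M : ℝ} (hM : 0 ≤ M) (hB : HB v M) (x : EuclideanSpace ℝ (Fin d)) {r : ℝ} (hr : 0 < r) :
    ∫ y in ball x (2*r), |v y - mn v x r| ≤ 2 * 4^d * M * vb d r := by
  have h1 := int_abs_le hv x (show 0 < 2*r by positivity) (mn v x r) (mn v x (2*r))
  have h2 := hB x (2*r) (by positivity)
  have h3 := mn_double hv hB x hr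
  rw [abs_sub_comm] at h3
  rw [vb_mul] at h1 h2
  have hv0 := vb_pos (d := d) hr
  have h4 : 2^d * vb d r * |mn v x (2*r) - mn v x r| ≤ 2^d * vb d r * (2^d * M) := by gcongr
  have h5 : (4:ℝ)^d = 2^d * 2^d := by rw [← mul_pow]; norm_num
  have h6 : (1:ℝ) ≤ 2^d := one_le_pow₀ (by norm_num)
  have h7 : M * (2^d * vb d r) ≤ 4^d * M * vb d r := by
    rw [h5]
    have : 0 ≤ M * (2^d * vb d r) := by positivity
    nlinarith
  rw [h5] at *
  linarith

/-- uniform L2 oscillation bound -/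
def HD {d : ℕ} (v : EuclideanSpace ℝ (Fin d) → ℝ) (D : ℝ) : Prop :=
  ∀ (x : EuclideanSpace ℝ (Fin d)) (r : ℝ), 0 < r →
    ∫⁻ y in ball x r, ENNReal.ofReal ((v y - mn v x r)^2) ≤ ENNReal.ofReal (D * vb d r)

lemma sel_radius {d : ℕ} {v : EuclideanSpace ℝ (Fin d) → ℝ} (hv : LocallyIntegrable v volume)
    {M K : ℝ} (hM : 0 < M) (hK : 2 * 4^d ≤ K) (hB : HB v M) (x₀ : EuclideanSpace ℝ (Fin d))
    {R : ℝ} (hR : 0 < R) :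
    ∀ᵐ x, x ∈ ball x₀ R → K * M < |v x - mn v x₀ R| → ∃ r, 0 < r ∧ 6 * r ≤ R ∧
      K * M * vb d r < ∫ y in ball x r, |v y - mn v x₀ R| ∧
      ∫ y in ball x (6*r), |v y - mn v x₀ R| ≤ K * M * vb d (6 * r) := by
  set b := mn v x₀ R with hb
  have hg : LocallyIntegrable (fun y => |v y - b|) volume := by
    have : LocallyIntegrable (fun y => v y - b) volume := hv.sub (locallyIntegrable_const b)
    exact fun x => (this x).norm
  filter_upwards [IsUnifLocDoublingMeasure.ae_tendsto_average volume hg 1] with x hx hxB hgx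
  have hδ : Filter.Tendsto (fun n : ℕ => R * (1/6:ℝ)^n) Filter.atTop (nhdsWithin 0 (Ioi 0)) := by
    rw [tendsto_nhdsWithin_iff]
    constructor
    · have := (tendsto_pow_atTop_nhds_zero_of_lt_one (r := (1/6:ℝ)) (by norm_num)
        (by norm_num)).const_mul R
      simpa using this
    · exact Filter.Eventually.of_forall fun n => by
        show 0 < R * (1/6:ℝ)^n
        positivity
  have h1 := hx (fun _ => x) _ hδ (Filter.Eventually.of_forall fun n => by
    apply mem_closedBall_self; positivity)
  have h2 := (h1.eventually (lt_mem_nhds hgx)).exists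
  have h3 : ∃ n : ℕ, K * M * vb d (R * (1/6:ℝ)^n) < ∫ y in ball x (R * (1/6:ℝ)^n), |v y - b| := by
    obtain ⟨n, hn⟩ := h2
    refine ⟨n, ?_⟩
    have hr : 0 < R * (1/6:ℝ)^n := by positivity
    have hae : closedBall x (R * (1/6:ℝ)^n) =ᵐ[volume] ball x (R * (1/6:ℝ)^n) := by
      rw [← ball_union_sphere]
      exact union_ae_eq_left_of_ae_eq_empty
        (ae_eq_empty.2 (Measure.addHaar_sphere_of_ne_zero _ _ hr.ne'))
    rw [setAverage_congr hae, setAverage_eq, vol_ball hr, smul_eq_mul,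
      lt_inv_mul_iff₀ (vb_pos hr)] at hn
    linarith
  classical
  set n := Nat.find h3 with hn
  have hn1 := Nat.find_spec h3
  rw [← hn] at hn1
  have hn0 : n ≠ 0 := by
    intro h0
    rw [h0] at hn1
    simp only [pow_zero, mul_one] at hn1
    have a1 := int_double hv hM.le hB x₀ hR
    have a2 : ∫ y in ball x R, |v y - b| ≤ ∫ y in ball x₀ (2*R), |v y - b| :=
      setIntegral_mono_set (LI.abs_sub hv _ _ _) (Filter.Eventually.of_forall fun y => abs_nonneg _)
        (LE.le.eventuallyLE (ball_subset_ball' (by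
          rw [mem_ball] at hxB; linarith)))
    have a3 : 2 * 4^d * M * vb d R ≤ K * M * vb d R := by
      have := vb_pos (d := d) hR
      gcongr
    linarith
  obtain ⟨k, hk⟩ := Nat.exists_eq_succ_of_ne_zero hn0
  have hk2 := Nat.find_min h3 (m := k) (by omega)
  have e : 6 * (R * (1/6:ℝ)^n) = R * (1/6:ℝ)^k := by
    rw [hk, pow_succ]; ring
  refine ⟨R * (1/6:ℝ)^n, by positivity, ?_, hn1, ?_⟩
  · rw [e]
    have : (1/6:ℝ)^k ≤ 1 := pow_le_one₀ (by norm_num) (by norm_num)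
    nlinarith
  · rw [e]
    exact not_lt.1 hk2

lemma JN_step {d : ℕ} {v : EuclideanSpace ℝ (Fin d) → ℝ} (hv : LocallyIntegrable v volume)
    {M K D : ℝ} (hM : 0 < M) (hK : K = 8 * 24^d) (hB : HB v M) (hD0 : 0 ≤ D) (hD : HD v D) :
    HD v (3/2 * K^2 * M^2 + D/2) := by
  intro x₀ R hR
  have hK4 : 2 * 4^d ≤ K := by
    rw [hK]
    have : (4:ℝ)^d ≤ 24^d := pow_le_pow_left₀ (by norm_num) (by norm_num) d
    have : (0:ℝ) < 4^d := by positivity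
    linarith
  have hK0 : 0 < K := by rw [hK]; positivity
  have hsel := sel_radius hv hM hK4 hB x₀ hR
  set b := mn v x₀ R with hb
  set f := fun y => ENNReal.ofReal ((v y - b)^2) with hf
  set t : Set (EuclideanSpace ℝ (Fin d)) := {x | x ∈ ball x₀ R ∧ ∃ r, 0 < r ∧ 6 * r ≤ R ∧
      K * M * vb d r < ∫ y in ball x r, |v y - b| ∧
      ∫ y in ball x (6*r), |v y - b| ≤ K * M * vb d (6 * r)} with ht
  have hex : ∀ x, ∃ r, x ∈ t → 0 < r ∧ 6 * r ≤ R ∧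
      K * M * vb d r < ∫ y in ball x r, |v y - b| ∧
      ∫ y in ball x (6*r), |v y - b| ≤ K * M * vb d (6 * r) := by
    intro x
    by_cases hx : x ∈ t
    · obtain ⟨r, hr⟩ := hx.2
      exact ⟨r, fun _ => hr⟩
    · exact ⟨0, fun h => absurd h hx⟩
  choose r hr using hex
  obtain ⟨u, hut, hdisj, hcov⟩ := Vitali.exists_disjoint_subfamily_covering_enlargement_closedBall
    t (fun x => x) r R (fun a ha => by have := hr a ha; linarith [this.1, this.2.1]) 5 (by norm_num)
  have hdisj' : u.PairwiseDisjoint fun a => ball a (r a) :=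
    hdisj.mono fun a => ball_subset_closedBall
  have hcount : u.Countable := hdisj'.countable_of_isOpen (fun a _ => isOpen_ball)
    (fun a ha => ⟨a, mem_ball_self (hr a (hut ha)).1⟩)
  have := hcount.to_subtype
  set U := ⋃ a ∈ u, ball a (6 * r a) with hU
  have hUm : MeasurableSet U :=
    (isOpen_biUnion fun a _ => isOpen_ball).measurableSet
  have htU : t ⊆ U := by
    intro x hx
    obtain ⟨a, ha, hsub⟩ := hcov x hx
    have h1 := hsub (mem_closedBall_self (hr x hx).1.le)
    refine mem_biUnion ha ?_
    rw [mem_closedBall] at h1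
    rw [mem_ball]
    linarith [(hr a (hut ha)).1]
  have hpt : ∀ᵐ x ∂(volume.restrict (ball x₀ R)), f x ≤ ENNReal.ofReal ((K*M)^2) + U.indicator f x := by
    rw [ae_restrict_iff' measurableSet_ball]
    filter_upwards [hsel] with x hx hxB
    by_cases hlt : K * M < |v x - b|
    · have : x ∈ U := htU ⟨hxB, hx hxB hlt⟩
      rw [indicator_of_mem this]
      exact le_add_self
    · refine le_trans ?_ le_self_add
      apply ENNReal.ofReal_le_ofReal
      rw [← sq_abs]
      exact pow_le_pow_left₀ (abs_nonneg _) (not_lt.1 hlt) 2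
  have s1 : ∫⁻ y in ball x₀ R, f y ≤ ENNReal.ofReal ((K*M)^2 * vb d R) + ∫⁻ y in U, f y := by
    refine (lintegral_mono_ae hpt).trans ?_
    rw [lintegral_add_left measurable_const, setLIntegral_const, vol_ball' hR,
      ← ENNReal.ofReal_mul (by positivity)]
    refine add_le_add le_rfl ?_
    rw [← lintegral_indicator hUm]
    exact setLIntegral_le_lintegral _ _
  set L := (2*D + 2*(K*M)^2) * 6^d / (K*M) with hL
  have hL0 : 0 ≤ L := by positivity
  have s2 : ∀ a ∈ u, ∫⁻ y in ball a (6 * r a), f y ≤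
      ENNReal.ofReal L * ∫⁻ y in ball a (r a), ENNReal.ofReal |v y - b| := by
    intro a ha
    obtain ⟨r0, r1, r2, r3⟩ := hr a (hut ha)
    have r6 : 0 < 6 * r a := by positivity
    have hvp := vb_pos (d := d) r6
    have q1 : |mn v a (6 * r a) - b| ≤ K * M := by
      have := (mn_sub_le hv a r6 b).trans r3
      rw [mul_comm] at this
      exact le_of_mul_le_mul_right this hvp
    have q2 : ∀ y, f y ≤ ENNReal.ofReal (2 * (K*M)^2) +
        ENNReal.ofReal 2 * ENNReal.ofReal ((v y - mn v a (6 * r a))^2) := by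
      intro y
      rw [← ENNReal.ofReal_mul (by norm_num), ← ENNReal.ofReal_add (by positivity) (by positivity)]
      apply ENNReal.ofReal_le_ofReal
      have : (mn v a (6 * r a) - b)^2 ≤ (K*M)^2 := by
        rw [← sq_abs]; exact pow_le_pow_left₀ (abs_nonneg _) q1 2
      nlinarith [sq_nonneg ((v y - mn v a (6 * r a)) - (mn v a (6 * r a) - b))]
    calc ∫⁻ y in ball a (6 * r a), f y
        ≤ ∫⁻ y in ball a (6 * r a), (ENNReal.ofReal (2 * (K*M)^2) +
          ENNReal.ofReal 2 * ENNReal.ofReal ((v y - mn v a (6 * r a))^2)) := lintegral_mono q2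
      _ = ENNReal.ofReal (2 * (K*M)^2) * ENNReal.ofReal (vb d (6 * r a)) + ENNReal.ofReal 2 *
          ∫⁻ y in ball a (6 * r a), ENNReal.ofReal ((v y - mn v a (6 * r a))^2) := by
          rw [lintegral_add_left measurable_const, setLIntegral_const, vol_ball' r6,
            lintegral_const_mul' _ _ ENNReal.ofReal_ne_top]
      _ ≤ ENNReal.ofReal (2 * (K*M)^2) * ENNReal.ofReal (vb d (6 * r a)) + ENNReal.ofReal 2 *
          ENNReal.ofReal (D * vb d (6 * r a)) := by
          gcongr
          exact hD a _ r6
      _ = ENNReal.ofReal (L * (K * M * vb d (r a))) := by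
          rw [← ENNReal.ofReal_mul (by positivity), ← ENNReal.ofReal_mul (by positivity),
            ← ENNReal.ofReal_add (by positivity) (by positivity)]
          congr 1
          rw [vb_mul, hL]
          field_simp
          ring
      _ ≤ ENNReal.ofReal (L * ∫ y in ball a (r a), |v y - b|) := by
          apply ENNReal.ofReal_le_ofReal
          exact mul_le_mul_of_nonneg_left r2.le hL0
      _ = _ := by
          rw [ENNReal.ofReal_mul hL0, ofReal_integral_eq_lintegral_ofReal (LI.abs_sub hv _ _ _)
            (Filter.Eventually.of_forall fun y => abs_nonneg _)]
  have s3 : ∫⁻ y in U, f y ≤ ENNReal.ofReal (L * (2 * 4^d * M * vb d R)) := by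
    calc ∫⁻ y in U, f y ≤ ∑' a : u, ∫⁻ y in ball (a : EuclideanSpace ℝ (Fin d)) (6 * r a), f y := by
          rw [hU, biUnion_eq_iUnion]
          exact lintegral_iUnion_le _ _
      _ ≤ ∑' a : u, ENNReal.ofReal L *
          ∫⁻ y in ball (a : EuclideanSpace ℝ (Fin d)) (r a), ENNReal.ofReal |v y - b| :=
          ENNReal.tsum_le_tsum fun a => s2 a a.2
      _ = ENNReal.ofReal L * ∫⁻ y in ⋃ a ∈ u, ball a (r a), ENNReal.ofReal |v y - b| := by
          rw [ENNReal.tsum_mul_left, lintegral_biUnion hcount (fun a _ => measurableSet_ball) hdisj']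
      _ ≤ ENNReal.ofReal L * ∫⁻ y in ball x₀ (2*R), ENNReal.ofReal |v y - b| := by
          gcongr
          refine iUnion₂_subset fun a ha => ?_
          obtain ⟨r0, r1, r2, r3⟩ := hr a (hut ha)
          apply ball_subset_ball'
          have : dist a x₀ < R := (hut ha).1
          linarith
      _ = ENNReal.ofReal (L * ∫ y in ball x₀ (2*R), |v y - b|) := by
          rw [ENNReal.ofReal_mul hL0, ofReal_integral_eq_lintegral_ofReal (LI.abs_sub hv _ _ _)
            (Filter.Eventually.of_forall fun y => abs_nonneg _)]
      _ ≤ _ := by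
          apply ENNReal.ofReal_le_ofReal
          exact mul_le_mul_of_nonneg_left (int_double hv hM.le hB x₀ hR) hL0
  have hvR := vb_pos (d := d) hR
  refine s1.trans ((add_le_add_right s3 _).trans ?_)
  rw [← ENNReal.ofReal_add (by positivity) (by positivity)]
  apply ENNReal.ofReal_le_ofReal
  have e24 : (24:ℝ)^d = 6^d * 4^d := by rw [← mul_pow]; norm_num
  have e2 : L * (2 * 4^d * M * vb d R) = (2*D + 2*(K*M)^2) / 4 * vb d R := by
    rw [hL]
    have : (6:ℝ)^d * 4^d = K / 8 := by rw [hK, e24]; ring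
    have e3 : (2*D + 2*(K*M)^2) * 6^d / (K*M) * (2 * 4^d * M * vb d R) =
      (2*D + 2*(K*M)^2) / (K*M) * (2 * (6^d * 4^d) * M * vb d R) := by ring
    rw [e3, this]
    field_simp
    ring
  rw [e2]
  apply le_of_eq
  ring

/-- truncation -/
def trn (N a : ℝ) : ℝ := max (-N) (min a N)

lemma trn_lip (N a b : ℝ) : |trn N a - trn N b| ≤ |a - b| := by
  unfold trn
  refine (abs_max_sub_max_le_max _ _ _ _).trans ?_
  simp only [sub_self, abs_zero]
  refine max_le (abs_nonneg _) ((abs_min_sub_min_le_max _ _ _ _).trans ?_)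
  simp

lemma trn_abs {N : ℝ} (hN : 0 ≤ N) (a : ℝ) : |trn N a| ≤ N := by
  unfold trn
  rw [abs_le]
  exact ⟨le_max_left _ _, max_le (by linarith) (min_le_right _ _)⟩

lemma trn_abs' {N : ℝ} (hN : 0 ≤ N) (a : ℝ) : |trn N a| ≤ |a| := by
  have := trn_lip N a 0
  have h0 : trn N 0 = 0 := by simp [trn, hN]
  simpa [h0] using this

lemma trn_cont (N : ℝ) : Continuous (trn N) := by unfold trn; fun_prop

lemma trn_eq {N a : ℝ} (h : |a| ≤ N) : trn N a = a := by
  rw [abs_le] at h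
  simp [trn, h.1, h.2]

lemma LI.trn {d : ℕ} {v : EuclideanSpace ℝ (Fin d) → ℝ} (hv : LocallyIntegrable v volume)
    {N : ℝ} (hN : 0 ≤ N) : LocallyIntegrable (fun y => trn N (v y)) volume :=
  hv.mono ((trn_cont N).comp_aestronglyMeasurable hv.aestronglyMeasurable)
    (Filter.Eventually.of_forall fun y => trn_abs' hN (v y))

lemma HB.trn {d : ℕ} {v : EuclideanSpace ℝ (Fin d) → ℝ} (hv : LocallyIntegrable v volume)
    {N M : ℝ} (hN : 0 ≤ N) (hB : HB v M) : HB (fun y => trn N (v y)) (2 * M) := by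
  intro x r hr
  have hv' := LI.trn hv hN
  set c := _root_.trn N (mn v x r) with hc
  have h1 := int_abs_le hv' x hr (mn (fun y => _root_.trn N (v y)) x r) c
  have h2 := mn_sub_le hv' x hr c
  rw [abs_sub_comm] at h2
  have h3 : ∫ y in ball x r, |_root_.trn N (v y) - c| ≤ ∫ y in ball x r, |v y - mn v x r| :=
    integral_mono (LI.abs_sub hv' x r c) (LI.abs_sub hv x r _) fun y => trn_lip N _ _
  have := hB x r hr
  linarith

lemma HD.trn {d : ℕ} {v : EuclideanSpace ℝ (Fin d) → ℝ} (hv : LocallyIntegrable v volume)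
    {N : ℝ} (hN : 0 ≤ N) : HD (fun y => trn N (v y)) (4 * N^2) := by
  intro x r hr
  have hv' := LI.trn hv hN
  have h1 := mn_sub_le hv' x hr 0
  simp only [sub_zero] at h1
  have h2 : ∫ y in ball x r, |_root_.trn N (v y)| ≤ ∫ y in ball x r, N :=
    integral_mono (LI.on_ball hv' x r).abs (const_on_ball N x r) fun y => trn_abs hN _
  rw [setIntegral_const, vol_ball hr, smul_eq_mul] at h2
  have h3 := le_of_mul_le_mul_left (h1.trans h2) (vb_pos hr)
  calc _ ≤ ∫⁻ y in ball x r, ENNReal.ofReal (4 * N^2) := by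
        refine lintegral_mono fun y => ENNReal.ofReal_le_ofReal ?_
        have h4 := trn_abs hN (v y)
        have h5 : |_root_.trn N (v y) - mn (fun y => _root_.trn N (v y)) x r| ≤ 2 * N :=
          (abs_sub _ _).trans (by linarith)
        rw [← sq_abs]
        nlinarith [abs_nonneg (_root_.trn N (v y) - mn (fun y => _root_.trn N (v y)) x r)]
    _ = _ := by
        rw [setLIntegral_const, vol_ball' hr, ← ENNReal.ofReal_mul (by positivity)]

lemma JN_trn {d : ℕ} {v : EuclideanSpace ℝ (Fin d) → ℝ} (hv : LocallyIntegrable v volume)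
    {N M K : ℝ} (hN : 0 ≤ N) (hM : 0 < M) (hK : K = 8 * 24^d) (hB : HB v M) :
    HD (fun y => trn N (v y)) (12 * K^2 * M^2) := by
  have hit : ∀ n : ℕ, HD (fun y => trn N (v y)) (12 * K^2 * M^2 + 4 * N^2 * (1/2)^n) := by
    intro n
    induction n with
    | zero =>
      intro x r hr
      refine (HD.trn hv hN x r hr).trans (ENNReal.ofReal_le_ofReal ?_)
      have := vb_pos (d := d) hr
      have : 0 ≤ 12 * K^2 * M^2 * vb d r := by positivity
      simp only [pow_zero]
      linarith
    | succ n ih =>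
      have := JN_step (LI.trn hv hN) (show 0 < 2 * M by positivity) hK (HB.trn hv hN hB)
        (by positivity) ih
      convert this using 1
      rw [pow_succ]
      ring
  intro x r hr
  refine ge_of_tendsto' (f := fun n : ℕ =>
    ENNReal.ofReal ((12 * K^2 * M^2 + 4 * N^2 * (1/2)^n) * vb d r)) (x := Filter.atTop) ?_ 
    (fun n => hit n x r hr)
  refine (ENNReal.continuous_ofReal.tendsto _).comp ?_
  have h1 := tendsto_pow_atTop_nhds_zero_of_lt_one (r := (1/2:ℝ)) (by norm_num) (by norm_num)
  have h2 := ((h1.const_mul (4 * N^2)).const_add (12 * K^2 * M^2)).mul_const (vb d r)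
  simpa using h2

lemma JN_pos {d : ℕ} {v : EuclideanSpace ℝ (Fin d) → ℝ} (hv : LocallyIntegrable v volume)
    {M K : ℝ} (hM : 0 < M) (hK : K = 8 * 24^d) (hB : HB v M) :
    HD v (12 * K^2 * M^2) := by
  intro x r hr
  have hpt : ∀ y, Filter.Tendsto (fun n : ℕ => trn n (v y)) Filter.atTop (nhds (v y)) := by
    intro y
    refine tendsto_const_nhds.congr' ?_
    obtain ⟨m, hm⟩ := exists_nat_ge |v y|
    filter_upwards [Filter.eventually_ge_atTop m] with n hn
    exact (trn_eq (hm.trans (by exact_mod_cast hn))).symm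
  have hmn : Filter.Tendsto (fun n : ℕ => mn (fun y => trn n (v y)) x r) Filter.atTop
      (nhds (mn v x r)) := by
    simp only [mn, setAverage_eq]
    refine Filter.Tendsto.const_smul ?_ _
    refine tendsto_integral_of_dominated_convergence (fun y => |v y|) ?_ (LI.on_ball hv x r).abs ?_ ?_
    · exact fun n => (LI.on_ball (LI.trn hv (Nat.cast_nonneg n)) x r).aestronglyMeasurable
    · exact fun n => Filter.Eventually.of_forall fun y => trn_abs' (Nat.cast_nonneg n) _
    · exact Filter.Eventually.of_forall fun y => hpt y
  have hlim : ∀ y, Filter.Tendsto (fun n : ℕ =>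
      ENNReal.ofReal ((trn n (v y) - mn (fun y => trn n (v y)) x r)^2)) Filter.atTop
      (nhds (ENNReal.ofReal ((v y - mn v x r)^2))) := fun y =>
    (ENNReal.continuous_ofReal.tendsto _).comp (((hpt y).sub hmn).pow 2)
  calc ∫⁻ y in ball x r, ENNReal.ofReal ((v y - mn v x r)^2)
      = ∫⁻ y in ball x r, Filter.liminf (fun n : ℕ =>
      ENNReal.ofReal ((trn n (v y) - mn (fun y => trn n (v y)) x r)^2)) Filter.atTop := by
        refine lintegral_congr fun y => (hlim y).liminf_eq.symm
    _ ≤ Filter.liminf (fun n : ℕ => ∫⁻ y in ball x r, 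
      ENNReal.ofReal ((trn n (v y) - mn (fun y => trn n (v y)) x r)^2)) Filter.atTop := by
        refine lintegral_liminf_le' fun n => ?_
        have := (LI.on_ball (LI.trn hv (Nat.cast_nonneg n)) x r).aestronglyMeasurable.aemeasurable
        exact ((this.sub_const _).pow_const 2).ennreal_ofReal
    _ ≤ _ := by
        refine Filter.liminf_le_of_frequently_le' (Filter.Frequently.of_forall fun n => ?_)
        exact JN_trn hv (Nat.cast_nonneg n) hM hK hB x r hr

lemma JN {d : ℕ} {v : EuclideanSpace ℝ (Fin d) → ℝ} (hv : LocallyIntegrable v volume)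
    {M K : ℝ} (hM : 0 ≤ M) (hK : K = 8 * 24^d) (hB : HB v M) :
    HD v (12 * K^2 * M^2) := by
  intro x r hr
  refine ge_of_tendsto' (f := fun n : ℕ =>
    ENNReal.ofReal ((12 * K^2 * (M + 1 / ((n:ℝ)+1))^2) * vb d r)) (x := Filter.atTop) ?_ 
    (fun n => JN_pos hv (by positivity) hK ?_ x r hr)
  · refine (ENNReal.continuous_ofReal.tendsto _).comp ?_
    have h1 := tendsto_one_div_add_atTop_nhds_zero_nat (𝕜 := ℝ)
    have h2 := (((h1.const_add M).pow 2).const_mul (12 * K^2)).mul_const (vb d r)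
    simpa using h2
  · intro x r hr
    refine (hB x r hr).trans ?_
    have := vb_pos (d := d) hr
    gcongr
    have : 0 < 1 / ((n:ℝ)+1) := by positivity
    linarith

lemma mn_iter {d : ℕ} {v : EuclideanSpace ℝ (Fin d) → ℝ} (hv : LocallyIntegrable v volume)
    {M : ℝ} (hB : HB v M) (x : EuclideanSpace ℝ (Fin d)) {R : ℝ} (hR : 0 < R) (k : ℕ) :
    |mn v x (2^k * R) - mn v x R| ≤ k * (2^d * M) := by
  induction k with
  | zero => simp
  | succ k ih =>
    have h1 := mn_double hv hB x (show 0 < 2^k * R by positivity)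
    have e : (2:ℝ)^(k+1) * R = 2 * (2^k * R) := by rw [pow_succ]; ring
    rw [e]
    rw [abs_sub_comm] at h1
    have := abs_sub_le (mn v x (2 * (2^k * R))) (mn v x (2^k * R)) (mn v x R)
    push_cast
    linarith

lemma growth {d : ℕ} {v : EuclideanSpace ℝ (Fin d) → ℝ} (hv : LocallyIntegrable v volume)
    {M Q : ℝ} (hQ : 0 ≤ Q) (hB : HB v M) (hD : HD v (Q * M^2))
    (x : EuclideanSpace ℝ (Fin d)) {R : ℝ} (hR : 0 < R) (k : ℕ) :
    ∫⁻ y in ball x (2^k * R), ENNReal.ofReal ((v y - mn v x R)^2) ≤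
      ENNReal.ofReal ((2 * Q + 2 * k^2 * 4^d) * 2^(k*d) * (M^2 * vb d R)) := by
  have r6 : 0 < 2^k * R := by positivity
  have hvp := vb_pos (d := d) r6
  have h1 := mn_iter hv hB x hR k
  set m := mn v x (2^k * R) with hm
  set b := mn v x R with hb
  have h2 : (m - b)^2 ≤ (k * (2^d * M))^2 := by
    rw [← sq_abs]; exact pow_le_pow_left₀ (abs_nonneg _) h1 2
  set L := (k * (2^d * M))^2 with hL
  have hL0 : 0 ≤ L := sq_nonneg _
  have q2 : ∀ y, ENNReal.ofReal ((v y - b)^2) ≤ ENNReal.ofReal (2 * L) +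
      ENNReal.ofReal 2 * ENNReal.ofReal ((v y - m)^2) := by
    intro y
    rw [← ENNReal.ofReal_mul (by norm_num), ← ENNReal.ofReal_add (by positivity) (by positivity)]
    apply ENNReal.ofReal_le_ofReal
    nlinarith [sq_nonneg ((v y - m) - (m - b))]
  calc ∫⁻ y in ball x (2^k * R), ENNReal.ofReal ((v y - b)^2)
      ≤ ∫⁻ y in ball x (2^k * R), (ENNReal.ofReal (2 * L) +
        ENNReal.ofReal 2 * ENNReal.ofReal ((v y - m)^2)) := lintegral_mono q2
    _ = ENNReal.ofReal (2 * L) * ENNReal.ofReal (vb d (2^k * R)) + ENNReal.ofReal 2 *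
        ∫⁻ y in ball x (2^k * R), ENNReal.ofReal ((v y - m)^2) := by
        rw [lintegral_add_left measurable_const, setLIntegral_const, vol_ball' r6,
          lintegral_const_mul' _ _ ENNReal.ofReal_ne_top]
    _ ≤ ENNReal.ofReal (2 * L) * ENNReal.ofReal (vb d (2^k * R)) + ENNReal.ofReal 2 *
        ENNReal.ofReal (Q * M^2 * vb d (2^k * R)) := by
        gcongr
        exact hD x _ r6
    _ = _ := by
        rw [← ENNReal.ofReal_mul (by positivity), ← ENNReal.ofReal_mul (by positivity),
          ← ENNReal.ofReal_add (by positivity) (by positivity)]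
        congr 1
        have e4 : (4:ℝ)^d = 2^d * 2^d := by rw [← mul_pow]; norm_num
        rw [vb_mul, hL, e4, pow_mul]
        ring

lemma summ (d : ℕ) {Q : ℝ} (hQ : 0 ≤ Q) : Summable fun k : ℕ =>
    Real.exp (1 - 4^k/32) * ((2 * Q + 2 * (k:ℝ)^2 * 4^d) * 2^(k*d)) := by
  have hg : Summable fun k : ℕ => (Real.exp 1 * (2 * Q + 2 * 4^d) * ((d+2).factorial * 32^(d+2))) *
      (1/4:ℝ)^k := (summable_geometric_of_lt_one (by norm_num) (by norm_num)).mul_left _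
  refine Summable.of_nonneg_of_le (fun k => by positivity) (fun k => ?_) hg
  have h1 : Real.exp (1 - 4^k/32) ≤ Real.exp 1 * ((d+2).factorial * 32^(d+2) / (4^k)^(d+2)) := by
    rw [sub_eq_add_neg, Real.exp_add]
    gcongr
    have h2 := Real.pow_div_factorial_le_exp (4^k/32 : ℝ) (by positivity) (d+2)
    rw [Real.exp_neg]
    have h3 : (0:ℝ) < (4^k/32)^(d+2) / (d+2).factorial := by positivity
    refine (inv_anti₀ h3 h2).trans (le_of_eq ?_)
    rw [div_pow]
    field_simp
  have h4 : (k:ℝ)^2 ≤ 4^k := by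
    have : (k:ℝ) ≤ 2^k := by exact_mod_cast (Nat.lt_two_pow_self (n := k)).le
    calc (k:ℝ)^2 ≤ (2^k)^2 := pow_le_pow_left₀ (by positivity) this 2
      _ = 4^k := by rw [← pow_mul, mul_comm, pow_mul]; norm_num
  have h5 : 2 * Q + 2 * (k:ℝ)^2 * 4^d ≤ (2 * Q + 2 * 4^d) * 4^k := by
    have a1 : (1:ℝ) ≤ 4^k := one_le_pow₀ (by norm_num)
    have a2 : 2 * (k:ℝ)^2 * 4^d ≤ 2 * 4^k * 4^d := by gcongr
    nlinarith
  have h6 : (2:ℝ)^(k*d) ≤ (4^k)^d := by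
    rw [pow_mul]; gcongr; norm_num
  calc _ ≤ (Real.exp 1 * ((d+2).factorial * 32^(d+2) / (4^k)^(d+2))) * 
        (((2 * Q + 2 * 4^d) * 4^k) * (4^k)^d) := by gcongr
    _ = _ := by
      rw [one_div, inv_pow]
      rw [pow_add ((4:ℝ)^k) d 2]
      field_simp

lemma gauss_bound (d : ℕ) {Q : ℝ} (hQ : 0 ≤ Q) : ∃ C : ℝ, 0 ≤ C ∧
    ∀ (v : EuclideanSpace ℝ (Fin d) → ℝ), LocallyIntegrable v volume → ∀ M : ℝ, HB v M →
    HD v (Q * M^2) → ∀ (x : EuclideanSpace ℝ (Fin d)) (R : ℝ), 0 < R →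
    ∫⁻ y, ENNReal.ofReal (Gk (2*R^2) (x - y) * (v y - mn v x R)^2) ≤ ENNReal.ofReal (C * M^2) := by
  set a : ℕ → ℝ := fun k => Real.exp (1 - 4^k/32) with ha
  set S := ∑' k : ℕ, Real.exp (1 - 4^k/32) * ((2 * Q + 2 * (k:ℝ)^2 * 4^d) * 2^(k*d)) with hS
  have hS0 : 0 ≤ S := tsum_nonneg fun k => by positivity
  refine ⟨(8 * Real.pi) ^ (-(d:ℝ)/2) * vb d 1 * S, 
    mul_nonneg (mul_nonneg (by positivity) (vb_pos one_pos).le) hS0, ?_⟩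
  intro v hv M hB hD x R hR
  set b := mn v x R with hb
  have hmeas : AEMeasurable (fun y => ENNReal.ofReal ((v y - b)^2)) volume :=
    ((hv.aestronglyMeasurable.aemeasurable.sub_const _).pow_const 2).ennreal_ofReal
  set c0 := (8 * Real.pi * R^2) ^ (-(d:ℝ)/2) with hc0
  have hc00 : 0 < c0 := by positivity
  have hpt : ∀ y, ENNReal.ofReal (Gk (2*R^2) (x - y) * (v y - b)^2) ≤
      ENNReal.ofReal c0 * ∑' k : ℕ, ENNReal.ofReal (a k) *
        (ball x (2^k * R)).indicator (fun y => ENNReal.ofReal ((v y - b)^2)) y := by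
    intro y
    have hex : ∃ k : ℕ, dist y x < 2^k * R := by
      obtain ⟨k, hk⟩ := pow_unbounded_of_one_lt (dist y x / R) (one_lt_two)
      exact ⟨k, (div_lt_iff₀ hR).1 hk⟩
    classical
    set k := Nat.find hex with hk
    have hk1 := Nat.find_spec hex
    rw [← hk] at hk1
    have hG : Gk (2*R^2) (x - y) ≤ c0 * a k := by
      unfold Gk
      have e1 : 4 * Real.pi * (2*R^2) = 8 * Real.pi * R^2 := by ring
      rw [e1]
      refine mul_le_mul_of_nonneg_left (Real.exp_le_exp.2 ?_) hc00.le
      rcases Nat.eq_zero_or_pos k with h0 | h0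
      · rw [h0]
        have : -‖x - y‖^2 / (4 * (2*R^2)) ≤ 0 :=
          div_nonpos_of_nonpos_of_nonneg (by nlinarith [sq_nonneg ‖x - y‖]) (by positivity)
        norm_num
        linarith
      · obtain ⟨j, hj⟩ := Nat.exists_eq_succ_of_ne_zero h0.ne'
        have hj2 := not_lt.1 (Nat.find_min hex (m := j) (by omega))
        have e2 : dist y x = ‖x - y‖ := by rw [dist_comm, dist_eq_norm]
        rw [e2] at hj2
        have h3 : (2^j * R)^2 ≤ ‖x - y‖^2 := pow_le_pow_left₀ (by positivity) hj2 2
        have e3 : ((2:ℝ)^j)^2 = 4^j := by rw [← pow_mul, mul_comm, pow_mul]; norm_num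
        rw [mul_pow, e3] at h3
        have h4 : (4:ℝ)^j / 8 ≤ ‖x - y‖^2 / (4 * (2*R^2)) := by
          rw [div_le_div_iff₀ (by norm_num) (by positivity)]
          nlinarith
        have e5 : (4:ℝ)^(Nat.succ j) = 4^j*4 := pow_succ _ _
        rw [hj, e5, neg_div]
        linarith
    calc ENNReal.ofReal (Gk (2*R^2) (x - y) * (v y - b)^2)
        ≤ ENNReal.ofReal ((c0 * a k) * (v y - b)^2) := by
          apply ENNReal.ofReal_le_ofReal
          exact mul_le_mul_of_nonneg_right hG (sq_nonneg _)
      _ = ENNReal.ofReal c0 * (ENNReal.ofReal (a k) *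
        (ball x (2^k * R)).indicator (fun y => ENNReal.ofReal ((v y - b)^2)) y) := by
          rw [indicator_of_mem (show y ∈ ball x (2^k * R) from hk1), mul_assoc,
            ENNReal.ofReal_mul hc00.le, ENNReal.ofReal_mul (Real.exp_pos _).le]
      _ ≤ _ := by
          gcongr
          exact ENNReal.le_tsum (f := fun k : ℕ => ENNReal.ofReal (a k) *
            (ball x (2^k * R)).indicator (fun y => ENNReal.ofReal ((v y - b)^2)) y) k
  have hvR := vb_pos (d := d) hR
  calc _ ≤ ∫⁻ y, ENNReal.ofReal c0 * ∑' k : ℕ, ENNReal.ofReal (a k) *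
        (ball x (2^k * R)).indicator (fun y => ENNReal.ofReal ((v y - b)^2)) y := lintegral_mono hpt
    _ = ENNReal.ofReal c0 * ∑' k : ℕ, ENNReal.ofReal (a k) *
        ∫⁻ y in ball x (2^k * R), ENNReal.ofReal ((v y - b)^2) := by
        rw [lintegral_const_mul' _ _ ENNReal.ofReal_ne_top, lintegral_tsum]
        · congr 2
          ext k
          rw [lintegral_const_mul' _ _ ENNReal.ofReal_ne_top, lintegral_indicator measurableSet_ball]
        · intro k
          exact (hmeas.indicator measurableSet_ball).const_mul _
    _ ≤ ENNReal.ofReal c0 * ∑' k : ℕ, ENNReal.ofReal ((Real.exp (1 - 4^k/32) *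
        ((2 * Q + 2 * (k:ℝ)^2 * 4^d) * 2^(k*d))) * (M^2 * vb d R)) := by
        refine mul_le_mul_right (ENNReal.tsum_le_tsum fun k => ?_) _
        rw [mul_assoc, ENNReal.ofReal_mul (Real.exp_pos _).le]
        exact mul_le_mul_right (growth hv hQ hB hD x hR k) _
    _ = ENNReal.ofReal (c0 * (S * (M^2 * vb d R))) := by
        rw [← ENNReal.ofReal_tsum_of_nonneg (fun k => by positivity)
          ((summ d hQ).mul_right _), tsum_mul_right, ENNReal.ofReal_mul hc00.le]
    _ = _ := by
        congr 1
        have e1 : c0 = (8 * Real.pi) ^ (-(d:ℝ)/2) * (R^d)⁻¹ := by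
          rw [hc0, Real.mul_rpow (by positivity) (by positivity)]
          congr 1
          rw [← Real.rpow_natCast R 2, ← Real.rpow_mul hR.le, ← Real.rpow_natCast R d,
            ← Real.rpow_neg hR.le]
          congr 1
          push_cast
          ring
        have e2 : vb d R = R^d * vb d 1 := by simp [vb]
        rw [e1, e2]
        field_simp

lemma Good_sq {d : ℕ} {v : EuclideanSpace ℝ (Fin d) → ℝ} (hv : LocallyIntegrable v volume)
    {C0 M : ℝ} (h : ∀ (x : EuclideanSpace ℝ (Fin d)) (R : ℝ), 0 < R →
      ∫⁻ y, ENNReal.ofReal (Gk (2*R^2) (x - y) * (v y - mn v x R)^2) ≤ ENNReal.ofReal (C0 * M^2))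
    (c : ℝ) : Good (fun y => (v y - c)^2) := by
  have hm : ∀ c : ℝ, AEStronglyMeasurable (fun y => (v y - c)^2) volume := fun c =>
    (hv.aestronglyMeasurable.sub aestronglyMeasurable_const).pow 2
  refine ⟨hm c, fun s hs => ?_⟩
  have hR : 0 < Real.sqrt (s/2) := Real.sqrt_pos.2 (by positivity)
  have h1 := h 0 _ hR
  set c' := mn v 0 (Real.sqrt (s/2)) with hc'
  have e : 2 * Real.sqrt (s/2)^2 = s := by rw [Real.sq_sqrt (by positivity)]; ring
  rw [e] at h1
  have e2 : ∀ y : EuclideanSpace ℝ (Fin d), Gk s (0 - y) = Gk s y := fun y => by simp [Gk]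
  simp only [e2] at h1
  have hi : Integrable (fun y => Gk s y * (v y - c')^2) volume := by
    refine ⟨(Gk_cont s).aestronglyMeasurable.mul (hm c'), ?_⟩
    rw [hasFiniteIntegral_iff_ofReal (Filter.Eventually.of_forall fun y =>
      mul_nonneg (Gk_pos hs y).le (sq_nonneg _))]
    exact h1.trans_lt ENNReal.ofReal_lt_top
  have hj : Integrable (fun y => 2 * (Gk s y * (v y - c')^2) + Gk s y * (2 * (c' - c)^2)) volume :=
    (hi.const_mul 2).add ((integrable_Gk0 hs).mul_const _)
  refine hj.mono' ((Gk_cont s).aestronglyMeasurable.mul (hm c))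
    (Filter.Eventually.of_forall fun y => ?_)
  have hg := Gk_pos hs y
  rw [Real.norm_of_nonneg (mul_nonneg hg.le (sq_nonneg _))]
  have : (v y - c)^2 ≤ 2 * (v y - c')^2 + 2 * (c' - c)^2 := by
    nlinarith [sq_nonneg ((v y - c') - (c' - c))]
  calc _ ≤ Gk s y * (2 * (v y - c')^2 + 2 * (c' - c)^2) := mul_le_mul_of_nonneg_left this hg.le
    _ = _ := by ring

lemma heatExt_sub_const {d : ℕ} {v : EuclideanSpace ℝ (Fin d) → ℝ} {c : ℝ}
    (hw : Good (fun y => v y - c)) {t : ℝ} (ht : 0 < t) :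
    (fun x => heatExt v t x) = fun x => heatExt (fun y => v y - c) t x + c := by
  ext x
  have hc := heat_const ht c x
  rw [heatExt_eq] at hc
  have e := integral_add (hw.integrable ht x) ((integrable_Gk ht x).mul_const c)
  rw [hc] at e
  rw [heatExt_eq, heatExt_eq, ← e]
  congr 1
  ext y
  ring

theorem statement_17 (d : ℕ) (hd : 1 ≤ d) :
    ∃ C : ℝ, 0 < C ∧
      ∀ v : EuclideanSpace ℝ (Fin d) → ℝ,
        LocallyIntegrable v volume →
        Integrable (fun y : EuclideanSpace ℝ (Fin d) =>
          (1 + ‖y‖) ^ (-(d : ℝ) - 1) * |v y|) →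
        ∀ M : ℝ, 0 ≤ M →
        -- the BMO seminorm of v is at most M
        (∀ (x : EuclideanSpace ℝ (Fin d)) (r : ℝ), 0 < r →
          (⨍ y in ball x r, |v y - ⨍ z in ball x r, v z|) ≤ M) →
        ∀ (x₀ : EuclideanSpace ℝ (Fin d)) (R : ℝ), 0 < R →
          (R ^ (-(d : ℝ)) *
              ∫ t in Ioc (0:ℝ) (R ^ 2), ∫ y in ball x₀ R,
                ∑ i, (pd i (fun w => heatExt v t w) y) ^ 2) ^ (1/2 : ℝ) ≤
            C * M := by
  obtain ⟨C0, hC0, hC⟩ := gauss_bound d (Q := 12 * (8 * 24^d : ℝ)^2) (by positivity)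
  set C2 := (d * ((8*Real.pi)^((d:ℝ)/2) * Real.exp (1/4))) * C0 with hC2
  have hC20 : 0 ≤ C2 := by positivity
  refine ⟨Real.sqrt C2 + 1, by positivity, ?_⟩
  intro v hv _ M hM h x₀ R hR
  have hB := HB_of h
  have hD := JN hv hM rfl hB
  have hG := hC v hv M hB hD
  set c := mn v x₀ R with hc
  have hw2 := Good_sq hv hG c
  have hwm : AEStronglyMeasurable (fun y => v y - c) volume :=
    hv.aestronglyMeasurable.sub aestronglyMeasurable_const
  have hw : Good (fun y => v y - c) := Good.of_sq hwm hw2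
  have h1 := carleson_of_good hw hw2 x₀ hR
  have h2 : heatExt (fun y => (v y - c)^2) (2*R^2) x₀ ≤ C0 * M^2 := by
    have hs : 0 < 2*R^2 := by positivity
    rw [heatExt_eq, integral_eq_lintegral_of_nonneg_ae
      (Filter.Eventually.of_forall fun y => mul_nonneg (Gk_pos hs _).le (sq_nonneg _))
      (hw2.integrable hs x₀).aestronglyMeasurable]
    exact ENNReal.toReal_le_of_le_ofReal (by positivity) (hG x₀ R hR)
  have h3 : (∫ t in Ioc (0:ℝ) (R ^ 2), ∫ y in ball x₀ R,
      ∑ i, (pd i (fun w => heatExt v t w) y) ^ 2) =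
      ∫ t in Ioc (0:ℝ) (R ^ 2), ∫ y in ball x₀ R,
        ∑ i, (pd i (heatExt (fun y => v y - c) t) y) ^ 2 := by
    refine setIntegral_congr_fun measurableSet_Ioc fun t ht => ?_
    rw [heatExt_sub_const hw ht.1]
    simp only [pd, fderiv_add_const]
  rw [h3]
  have h4 := h1.trans (mul_le_mul_of_nonneg_left h2 (by positivity))
  have h5 := mul_le_mul_of_nonneg_left h4 (Real.rpow_nonneg hR.le (-(d:ℝ)))
  have e1 : R ^ (-(d:ℝ)) * ((d * ((8*Real.pi*R^2)^((d:ℝ)/2) * Real.exp (1/4))) * (C0 * M^2))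
      = C2 * M^2 := by
    have e2 : (8*Real.pi*R^2)^((d:ℝ)/2) = (8 * Real.pi) ^ ((d:ℝ)/2) * R^(d:ℝ) := by
      rw [Real.mul_rpow (by positivity) (by positivity)]
      congr 1
      rw [← Real.rpow_natCast R 2, ← Real.rpow_mul hR.le]
      congr 1
      push_cast
      ring
    have e3 : R ^ (-(d:ℝ)) * R^(d:ℝ) = 1 := by
      rw [← Real.rpow_add hR]; simp
    rw [e2, hC2]
    linear_combination ((d:ℝ) * (8 * Real.pi) ^ ((d:ℝ)/2) * Real.exp (1/4) * C0 * M^2) * e3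
  rw [e1] at h5
  rw [← Real.sqrt_eq_rpow]
  calc _ ≤ Real.sqrt (C2 * M^2) := Real.sqrt_le_sqrt h5
    _ = Real.sqrt C2 * M := by rw [Real.sqrt_mul hC20, Real.sqrt_sq hM]
    _ ≤ _ := by nlinarith
end
end
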